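/- arXiv:1507.04903 — 6 statements merged into one kernel-verified Lean document; each statement's English description precedes it below -/
import Mathlib

section
/- Equip ℝ³ with the 3-dimensional causal order: (u,v,t) ⊑ (u',v',t') iff √((u'−u)² + (v'−v)²) ≤ t'−t. Then no pair of incomparable points has a join or a meet: if x, y ∈ ℝ³ satisfy ¬(x ⊑ y) and ¬(y ⊑ x), then there is no z ∈ ℝ³ that is a least upper bound of {x, y} (i.e., x ⊑ z, y ⊑ z, and z ⊑ w for every w with x ⊑ w and y ⊑ w), and there is no z ∈ ℝ³ that is a greatest lower bound of {x, y}. -/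
/-- The 3-dimensional causal order on ℝ³ (coordinates `(u, v, t)` with `u, v`
spatial and `t` time): `(u,v,t) ⊑ (u',v',t')` iff `√((u'−u)² + (v'−v)²) ≤ t'−t`. -/
def causalOrder3 (p q : ℝ × ℝ × ℝ) : Prop :=
  Real.sqrt ((q.1 - p.1) ^ 2 + (q.2.1 - p.2.1) ^ 2) ≤ q.2.2 - p.2.2

/-!
Let `x` and `y` be incomparable. On the segment joining their positions lies the position of an
event `m`, the *apex*, in which light rays from `x` and `y` meet. By the triangle inequality no
upper bound of `x` and `y` is earlier than `m`, so `m` is the only candidate for a join. Now move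
sideways from `m` by a vector `n` that is not parallel to the segment. By strict convexity the
distances to `x` and `y` both grow by less than `‖n‖`, so waiting for some `r < ‖n‖` gives an upper
bound of `x` and `y` that light from `m` cannot reach. Meets are joins under time reversal.
-/

theorem exists_not_sameRay_and_not_sameRay_neg {K E : Type*} [Field K] [LinearOrder K]
    [IsStrictOrderedRing K] [AddCommGroup E] [Module K E] (hE : 1 < Module.rank K E) {u : E}
    (hu : u ≠ 0) : ∃ n : E, ¬ SameRay K u n ∧ ¬ SameRay K u (-n) := by
  obtain ⟨n, hn⟩ := exists_linearIndependent_pair_of_one_lt_rank hE hu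
  exact ⟨n, not_or.mp fun h ↦ sameRay_or_sameRay_neg_iff_not_linearIndependent.mp h hn⟩

theorem exists_dist_add_lt_of_sbtw {E : Type*} [NormedAddCommGroup E] [NormedSpace ℝ E]
    [StrictConvexSpace ℝ E] (hE : 1 < Module.rank ℝ E) {a b c : E} (h : Sbtw ℝ a b c) :
    ∃ n : E, dist a (b + n) < dist a b + ‖n‖ ∧ dist c (b + n) < dist c b + ‖n‖ := by
  have hab : b - a ≠ 0 := sub_ne_zero.mpr h.ne_left
  have hbc : c - b ≠ 0 := sub_ne_zero.mpr h.ne_right.symm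
  obtain ⟨n, hn, hn_neg⟩ := exists_not_sameRay_and_not_sameRay_neg hE hab
  have hn_neg' : ¬ SameRay ℝ (c - b) (-n) := fun hr ↦
    hn_neg (h.wbtw.sameRay_vsub.trans hr fun h0 ↦ absurd h0 hbc)
  refine ⟨n, ?_, ?_⟩
  · calc dist a (b + n) = ‖b - a + n‖ := by rw [dist_comm, dist_eq_norm, add_sub_right_comm]
      _ < ‖b - a‖ + ‖n‖ := norm_add_lt_of_not_sameRay hn
      _ = dist a b + ‖n‖ := by rw [dist_comm, dist_eq_norm]
  · calc dist c (b + n) = ‖c - b + -n‖ := by rw [dist_eq_norm, sub_add_eq_sub_sub, sub_eq_add_neg]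
      _ < ‖c - b‖ + ‖-n‖ := norm_add_lt_of_not_sameRay hn_neg'
      _ = dist c b + ‖n‖ := by rw [norm_neg, dist_eq_norm]

/-- A point of spacetime over a metric space `X`, with the speed of light normalised to `1`. It is
a structure rather than `X × ℝ` so that its order is the causal one, not the product order. -/
@[ext]
structure Event (X : Type*) where
  position : X
  time : ℝ

namespace Event

section PseudoMetricSpace

variable {X : Type*} [PseudoMetricSpace X] {x y z m : Event X}

/-- The causal order: `x ≤ y` when a signal no faster than light can travel from `x` to `y`. -/
instance : LE (Event X) where
  le x y := dist x.position y.position ≤ y.time - x.time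

theorem le_def : x ≤ y ↔ dist x.position y.position ≤ y.time - x.time := Iff.rfl

instance : Preorder (Event X) where
  le_refl x := by simp [le_def]
  le_trans x y z hxy hyz := by
    rw [le_def] at *
    linarith [dist_triangle x.position y.position z.position]

theorem time_mono : Monotone (time : Event X → ℝ) :=
  fun _ _ hxy ↦ sub_nonneg.mp (dist_nonneg.trans hxy)

/-- Time reversal, as an isomorphism from the opposite of the causal order. -/
def timeReversal : (Event X)ᵒᵈ ≃o Event X where
  toFun x := ⟨(OrderDual.ofDual x).position, -(OrderDual.ofDual x).time⟩
  invFun x := OrderDual.toDual ⟨x.position, -x.time⟩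
  left_inv _ := OrderDual.ofDual.injective (Event.ext rfl (neg_neg _))
  right_inv _ := Event.ext rfl (neg_neg _)
  map_rel_iff' {x y} := by
    simp only [← OrderDual.ofDual_le_ofDual, le_def, Equiv.coe_fn_mk, neg_sub_neg, dist_comm]

/-- `m` is an event in which signals sent from `x` and `y` along a shortest path between their
positions, at the speed of light, meet. The condition on times is the equality case of the triangle
inequality; it forces both intervals to be lightlike. -/
structure IsApex (x y m : Event X) : Prop where
  left_le : x ≤ m
  right_le : y ≤ m
  time_sub_add_time_sub : m.time - x.time + (m.time - y.time) = dist x.position y.position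

namespace IsApex

theorem symm (h : IsApex x y m) : IsApex y x m :=
  ⟨h.right_le, h.left_le, by rw [add_comm, h.time_sub_add_time_sub, dist_comm]⟩

theorem time_le (h : IsApex x y m) (hxz : x ≤ z) (hyz : y ≤ z) : m.time ≤ z.time := by
  rw [le_def] at hxz hyz
  linarith [h.time_sub_add_time_sub, dist_triangle_right x.position y.position z.position]

theorem dist_left (h : IsApex x y m) : dist x.position m.position = m.time - x.time := by
  refine le_antisymm h.left_le ?_
  linarith [h.time_sub_add_time_sub, le_def.mp h.right_le,
    dist_triangle_right x.position y.position m.position]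

theorem dist_right (h : IsApex x y m) : dist y.position m.position = m.time - y.time :=
  h.symm.dist_left

theorem position_ne_left (h : IsApex x y m) (hyx : ¬ y ≤ x) :
    m.position ≠ x.position := by
  intro hpos
  have htime : m.time = x.time := by
    rw [← sub_eq_zero, ← h.dist_left, hpos, dist_self]
  exact hyx (Event.ext hpos htime ▸ h.right_le)

end IsApex

end PseudoMetricSpace

section MetricSpace

variable {X : Type*} [MetricSpace X] {x y : Event X}

theorem eq_of_le_of_time_le (hxy : x ≤ y) (htime : y.time ≤ x.time) : x = y := by
  rw [le_def] at hxy
  have hdist : dist x.position y.position = 0 := le_antisymm (by linarith) dist_nonneg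
  exact Event.ext (dist_eq_zero.mp hdist) (by linarith)

instance : PartialOrder (Event X) where
  le_antisymm _ _ hxy hyx := eq_of_le_of_time_le hxy (time_mono hyx)

end MetricSpace

theorem exists_isApex {V : Type*} [SeminormedAddCommGroup V] [NormedSpace ℝ V] {x y : Event V}
    (hxy : ¬ x ≤ y) (hyx : ¬ y ≤ x) : ∃ m, IsApex x y m := by
  rw [le_def, not_le] at hxy hyx
  rw [dist_comm] at hyx
  set d := dist x.position y.position
  -- The radii are the delays `m.time - x.time` and `m.time - y.time`: their sum has to be `d`, and
  -- their difference is `y.time - x.time`.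
  obtain ⟨p, hxp, hpy⟩ := exists_dist_le_le (x := x.position) (z := y.position)
    (δ := (d + (y.time - x.time)) / 2) (ε := (d - (y.time - x.time)) / 2)
    (by linarith) (by linarith) (by linarith)
  rw [dist_comm] at hpy
  refine ⟨⟨p, (d + x.time + y.time) / 2⟩, ?_, ?_, ?_⟩
  · rw [le_def]; linarith
  · rw [le_def]; linarith
  · ring

section StrictConvexSpace

variable {V : Type*} [NormedAddCommGroup V] [NormedSpace ℝ V] [StrictConvexSpace ℝ V]
  {x y m z : Event V}

theorem IsApex.sbtw_position (h : IsApex x y m) (hxy : ¬ x ≤ y) (hyx : ¬ y ≤ x) :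
    Sbtw ℝ x.position m.position y.position := by
  refine ⟨dist_add_dist_eq_iff.mp ?_, h.position_ne_left hyx, h.symm.position_ne_left hxy⟩
  rw [dist_comm m.position, h.dist_left, h.dist_right, h.time_sub_add_time_sub]

theorem IsApex.exists_upperBound_not_le (hV : 1 < Module.rank ℝ V) (h : IsApex x y m)
    (hxy : ¬ x ≤ y) (hyx : ¬ y ≤ x) : ∃ w, x ≤ w ∧ y ≤ w ∧ ¬ m ≤ w := by
  obtain ⟨n, hxn, hyn⟩ := exists_dist_add_lt_of_sbtw hV (h.sbtw_position hxy hyx)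
  rw [h.dist_left, ← sub_lt_iff_lt_add'] at hxn
  rw [h.dist_right, ← sub_lt_iff_lt_add'] at hyn
  obtain ⟨r, hr, hrn⟩ := exists_between (max_lt hxn hyn)
  obtain ⟨hxr, hyr⟩ := max_lt_iff.mp hr
  refine ⟨⟨m.position + n, m.time + r⟩, ?_, ?_, ?_⟩
  · rw [le_def]; linarith
  · rw [le_def]; linarith
  · simpa [le_def] using hrn

theorem not_isLUB_pair (hV : 1 < Module.rank ℝ V) (hxy : ¬ x ≤ y) (hyx : ¬ y ≤ x) :
    ¬ IsLUB {x, y} z := by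
  intro hz
  obtain ⟨m, hm⟩ := exists_isApex hxy hyx
  have hz_le_m : z ≤ m := (isLUB_le_iff hz).mpr (by simp [hm.left_le, hm.right_le])
  have hm_time_le : m.time ≤ z.time := hm.time_le (hz.1 (by simp)) (hz.1 (by simp))
  obtain rfl : z = m := eq_of_le_of_time_le hz_le_m hm_time_le
  obtain ⟨w, hxw, hyw, hzw⟩ := hm.exists_upperBound_not_le hV hxy hyx
  exact hzw ((isLUB_le_iff hz).mpr (by simp [hxw, hyw]))

theorem not_isGLB_pair (hV : 1 < Module.rank ℝ V) (hxy : ¬ x ≤ y) (hyx : ¬ y ≤ x) :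
    ¬ IsGLB {x, y} z := by
  intro hz
  have hz_reversed := timeReversal.isLUB_image'.mpr hz.dual
  rw [show OrderDual.ofDual ⁻¹' {x, y} = {OrderDual.toDual x, OrderDual.toDual y} from rfl,
    Set.image_pair] at hz_reversed
  refine not_isLUB_pair hV ?_ ?_ hz_reversed <;>
    rwa [timeReversal.le_iff_le, OrderDual.toDual_le_toDual]

end StrictConvexSpace

end Event

theorem no_join_no_meet_of_incomparable_general {V : Type*} [NormedAddCommGroup V]
    [NormedSpace ℝ V] [StrictConvexSpace ℝ V] (hV : 1 < Module.rank ℝ V) {x y : Event V}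
    (hxy : ¬ x ≤ y) (hyx : ¬ y ≤ x) : (¬ ∃ z, IsLUB {x, y} z) ∧ ¬ ∃ z, IsGLB {x, y} z :=
  ⟨fun ⟨_, hz⟩ ↦ Event.not_isLUB_pair hV hxy hyx hz,
    fun ⟨_, hz⟩ ↦ Event.not_isGLB_pair hV hxy hyx hz⟩

/-- Points of `ℝ³` as events over the plane. The plane is modelled by `ℂ`, whose norm is the
Euclidean one; `ℝ × ℝ` would carry the sup norm. -/
def coordinatesEquivEvent : ℝ × ℝ × ℝ ≃ Event ℂ where
  toFun p := ⟨⟨p.1, p.2.1⟩, p.2.2⟩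
  invFun e := (e.position.re, e.position.im, e.time)
  left_inv _ := rfl
  right_inv _ := rfl

theorem coordinatesEquivEvent_le_iff {p q : ℝ × ℝ × ℝ} :
    coordinatesEquivEvent p ≤ coordinatesEquivEvent q ↔ causalOrder3 p q := by
  rw [Event.le_def, dist_comm, Complex.dist_eq_re_im]
  rfl

/-- In three-dimensional Minkowski spacetime, no pair of causally incomparable
points has a join or a meet with respect to the causal order. -/
theorem no_join_no_meet_of_incomparable (x y : ℝ × ℝ × ℝ)
    (hxy : ¬ causalOrder3 x y) (hyx : ¬ causalOrder3 y x) :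
    (¬ ∃ z : ℝ × ℝ × ℝ, causalOrder3 x z ∧ causalOrder3 y z ∧
        ∀ w : ℝ × ℝ × ℝ, causalOrder3 x w → causalOrder3 y w → causalOrder3 z w) ∧
    (¬ ∃ z : ℝ × ℝ × ℝ, causalOrder3 z x ∧ causalOrder3 z y ∧
        ∀ w : ℝ × ℝ × ℝ, causalOrder3 w x → causalOrder3 w y → causalOrder3 w z) := by
  simp only [← coordinatesEquivEvent_le_iff] at *
  simpa [IsLUB, IsLeast, IsGLB, IsGreatest, mem_upperBounds, mem_lowerBounds, and_assoc,
    ← coordinatesEquivEvent.exists_congr_right, coordinatesEquivEvent.forall_congr_right] using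
    no_join_no_meet_of_incomparable_general (by simp [Complex.rank_real_complex]) hxy hyx
end

section
/- Let a < b be real numbers and let S be a partition of the open interval (a,b) into closed segments: the members of S are pairwise disjoint, their union is (a,b), and each member is of the form [c,d] for some c ≤ d. Then S contains uncountably many singleton members, i.e., the set { s ∈ S : s = {x} for some x } is uncountable. -/
/-!
By the Baire category theorem, a connected, locally connected, hereditarily Baire space has no
nontrivial countable partition `S` into closed sets (a form of Sierpiński's theorem). Otherwise let
`E` be the complement of the union of the interiors of the members of `S`; it is also the union of
their frontiers. If `E` is nonempty, Baire's theorem gives a connected open set `U` meeting `E` such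
that `U ∩ E` lies in a single member `s`. Then `U` meets the frontier of no other member, so `U`,
being connected, lies in `s`, hence in the interior of `s`, and cannot meet `E`. So `E` is empty and
the members are clopen.

In a separable order only countably many disjoint intervals are nondegenerate, so a partition into
closed intervals with countably many singletons would be countable.
-/

open Set TopologicalSpace

section Sierpinski

variable {X : Type*} [TopologicalSpace X] {S : Set (Set X)} {s U F : Set X}

theorem exists_isOpen_inter_subset_of_countable_closed_cover [BaireSpace F] (hF : F.Nonempty)
    (hcount : S.Countable) (hclosed : ∀ s ∈ S, IsClosed s) (hcover : F ⊆ ⋃₀ S) :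
    ∃ s ∈ S, ∃ U, IsOpen U ∧ (U ∩ F).Nonempty ∧ U ∩ F ⊆ s := by
  have := hF.to_subtype
  have := hcount.to_subtype
  have hcover' : ⋃ s : S, ((↑) ⁻¹' s.1 : Set F) = univ := by
    rwa [← preimage_iUnion, ← sUnion_eq_iUnion, preimage_eq_univ_iff, Subtype.range_coe]
  obtain ⟨⟨s, hs⟩, x, hx⟩ := nonempty_interior_of_iUnion_of_closed
    (fun s : S => (hclosed s s.2).preimage continuous_subtype_val) hcover'
  obtain ⟨V, hVs, ⟨U, hU, rfl⟩, hxU⟩ := mem_interior.1 hx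
  exact ⟨s, hs, U, hU, ⟨x, hxU, x.2⟩, fun y hy => @hVs ⟨y, hy.2⟩ hy.1⟩

theorem subset_interior_of_isPreconnected_of_disjoint_frontier (hU : IsPreconnected U)
    (hUs : (U ∩ s).Nonempty) (hfr : Disjoint U (frontier s)) : U ⊆ interior s := by
  have hsub : U ⊆ interior s ∪ (closure s)ᶜ := fun x hx => by
    by_contra h
    simp only [mem_union, mem_compl_iff, not_or, not_not] at h
    exact disjoint_left.1 hfr hx ⟨h.2, h.1⟩
  obtain ⟨x, hxU, hxs⟩ := hUs
  exact hU.subset_left_of_subset_union isOpen_interior isClosed_closure.isOpen_compl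
    (disjoint_compl_right_iff_subset.2 (interior_subset.trans subset_closure)) hsub
    ⟨x, hxU, (hsub hxU).resolve_right fun h => h (subset_closure hxs)⟩

/-- The boundary of a family of sets: the points interior to none of its members. For a partition
into closed sets this is the union of the frontiers of the members; it is defined as a complement
to be visibly closed, so that Baire's theorem can be applied inside it. -/
def partitionBoundary (S : Set (Set X)) : Set X :=
  (⋃ s ∈ S, interior s)ᶜ

theorem isClosed_partitionBoundary : IsClosed (partitionBoundary S) :=
  (isOpen_biUnion fun _ _ => isOpen_interior).isClosed_compl

theorem disjoint_interior_partitionBoundary (hs : s ∈ S) :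
    Disjoint (interior s) (partitionBoundary S) :=
  disjoint_compl_right_iff_subset.2 (subset_biUnion_of_mem (u := interior) hs)

theorem frontier_subset_partitionBoundary (hdisj : S.Pairwise Disjoint) (hs : s ∈ S)
    (hclosed : IsClosed s) : frontier s ⊆ partitionBoundary S := by
  intro x hx hx'
  obtain ⟨t, ht, hxt⟩ := mem_iUnion₂.1 hx'
  have hts : t ≠ s := by
    rintro rfl
    exact hx.2 hxt
  exact disjoint_left.1 (hdisj ht hs hts) (interior_subset hxt) (hclosed.frontier_subset hx)

theorem subset_of_inter_partitionBoundary_subset (hdisj : S.Pairwise Disjoint)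
    (hclosed : ∀ s ∈ S, IsClosed s) (hcover : U ⊆ ⋃₀ S) (hU : IsPreconnected U) (hs : s ∈ S)
    (hUs : (U ∩ s).Nonempty) (hsub : U ∩ partitionBoundary S ⊆ s) : U ⊆ s := by
  intro x hxU
  obtain ⟨t, ht, hxt⟩ := hcover hxU
  rcases eq_or_ne t s with rfl | hts
  · exact hxt
  have hfr : Disjoint U (frontier t) := disjoint_left.2 fun y hyU hy =>
    disjoint_left.1 (hdisj ht hs hts) ((hclosed t ht).frontier_subset hy)
      (hsub ⟨hyU, frontier_subset_partitionBoundary hdisj ht (hclosed t ht) hy⟩)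
  obtain ⟨y, hyU, hys⟩ := hUs
  have hUt := subset_interior_of_isPreconnected_of_disjoint_frontier hU ⟨x, hxU, hxt⟩ hfr
  exact (disjoint_left.1 (hdisj ht hs hts) (interior_subset (hUt hyU)) hys).elim

theorem partitionBoundary_eq_empty_of_countable [LocallyConnectedSpace X]
    (hbaire : ∀ F : Set X, IsClosed F → BaireSpace F) (hcount : S.Countable)
    (hdisj : S.Pairwise Disjoint) (hclosed : ∀ s ∈ S, IsClosed s) (hcover : ⋃₀ S = univ) :
    partitionBoundary S = ∅ := by
  by_contra hne
  have := hbaire _ (isClosed_partitionBoundary (S := S))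
  obtain ⟨s, hs, U, hU, ⟨x, hxU, hxE⟩, hUs⟩ :=
    exists_isOpen_inter_subset_of_countable_closed_cover (nonempty_iff_ne_empty.2 hne) hcount
      hclosed (hcover ▸ subset_univ _)
  obtain ⟨V, hVU, hV, hxV, hVconn⟩ :=
    locallyConnectedSpace_iff_subsets_isOpen_isConnected.1 inferInstance x U (hU.mem_nhds hxU)
  have hVs : V ⊆ s := subset_of_inter_partitionBoundary_subset hdisj hclosed
    (hcover ▸ subset_univ V) hVconn.isPreconnected hs ⟨x, hxV, hUs ⟨hxU, hxE⟩⟩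
    ((inter_subset_inter_left _ hVU).trans hUs)
  exact disjoint_left.1 (disjoint_interior_partitionBoundary hs)
    (interior_maximal hVs hV hxV) hxE

theorem univ_mem_of_countable_closed_partition [ConnectedSpace X] [LocallyConnectedSpace X]
    (hbaire : ∀ F : Set X, IsClosed F → BaireSpace F) (hcount : S.Countable)
    (hdisj : S.Pairwise Disjoint) (hclosed : ∀ s ∈ S, IsClosed s) (hcover : ⋃₀ S = univ) :
    univ ∈ S := by
  obtain ⟨x⟩ : Nonempty X := inferInstance
  obtain ⟨s, hs, hxs⟩ : x ∈ ⋃₀ S := hcover ▸ mem_univ x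
  have hfr : frontier s = ∅ := subset_empty_iff.1 <|
    partitionBoundary_eq_empty_of_countable hbaire hcount hdisj hclosed hcover ▸
      frontier_subset_partitionBoundary hdisj hs (hclosed s hs)
  rwa [(isClopen_iff_frontier_eq_empty.2 hfr).eq_univ ⟨x, hxs⟩] at hs

theorem mem_of_countable_closed_partition {C : Set X} (hC : IsConnected C)
    [LocallyConnectedSpace C] (hbaire : ∀ F : Set C, IsClosed F → BaireSpace F)
    (hcount : S.Countable) (hdisj : S.Pairwise Disjoint) (hclosed : ∀ s ∈ S, IsClosed s)
    (hcover : ⋃₀ S = C) : C ∈ S := by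
  have := isConnected_iff_connectedSpace.1 hC
  let T : Set (Set C) := preimage (↑) '' S
  have hTdisj : T.Pairwise Disjoint := by
    rintro _ ⟨s, hs, rfl⟩ _ ⟨t, ht, rfl⟩ hst
    exact (hdisj hs ht (ne_of_apply_ne _ hst)).preimage _
  have hTclosed : ∀ t ∈ T, IsClosed t :=
    forall_mem_image.2 fun s hs => (hclosed s hs).preimage continuous_subtype_val
  have hTcover : ⋃₀ T = univ := by
    rw [sUnion_image, ← preimage_sUnion, hcover, Subtype.coe_preimage_self]
  obtain ⟨s, hs, hCs⟩ :=
    univ_mem_of_countable_closed_partition hbaire (hcount.image _) hTdisj hTclosed hTcover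
  have hsC : s = C :=
    (hcover ▸ subset_sUnion_of_mem hs).antisymm fun x hx => eq_univ_iff_forall.1 hCs ⟨x, hx⟩
  exact hsC ▸ hs

end Sierpinski

theorem baireSpace_of_isClosed_of_locallyCompactSpace {X : Type*} [TopologicalSpace X] [T2Space X]
    [LocallyCompactSpace X] {F : Set X} (hF : IsClosed F) : BaireSpace F :=
  have := hF.locallyCompactSpace
  inferInstance

section Order

variable {α : Type*} [TopologicalSpace α]

theorem locallyCompactSpace_of_compactIccSpace [LinearOrder α] [OrderTopology α]
    [CompactIccSpace α] : LocallyCompactSpace α where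
  local_compact_nhds _ _ hU :=
    let ⟨b, c, _, hnhds, hsub⟩ := exists_Icc_mem_subset_of_mem_nhds hU
    ⟨Icc b c, hnhds, hsub, isCompact_Icc⟩

theorem locallyConnectedSpace_of_denselyOrdered [ConditionallyCompleteLinearOrder α]
    [OrderTopology α] [DenselyOrdered α] : LocallyConnectedSpace α :=
  locallyConnectedSpace_iff_connected_subsets.2 fun _ _ hU =>
    let ⟨b, c, _, hnhds, hsub⟩ := exists_Icc_mem_subset_of_mem_nhds hU
    ⟨Icc b c, hnhds, isPreconnected_Icc, hsub⟩

theorem interior_nonempty_of_ordConnected_of_nontrivial [LinearOrder α] [OrderTopology α]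
    [DenselyOrdered α] {s : Set α} (hs : s.OrdConnected) (hnt : s.Nontrivial) :
    (interior s).Nonempty := by
  obtain ⟨x, hx, y, hy, hxy⟩ := hnt.exists_lt
  exact (nonempty_Ioo.2 hxy).mono <|
    interior_maximal (Ioo_subset_Icc_self.trans (hs.out hx hy)) isOpen_Ioo

theorem countable_setOf_nontrivial_of_ordConnected [LinearOrder α] [OrderTopology α]
    [DenselyOrdered α] [SeparableSpace α] {S : Set (Set α)} (hdisj : S.Pairwise Disjoint)
    (hconn : ∀ s ∈ S, s.OrdConnected) : {s ∈ S | s.Nontrivial}.Countable :=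
  PairwiseDisjoint.countable_of_nonempty_interior (s := id)
    (hdisj.mono (sep_subset _ _))
    fun s hs => interior_nonempty_of_ordConnected_of_nontrivial (hconn s hs.1) hs.2

theorem countable_of_countable_singletons [LinearOrder α] [OrderTopology α]
    [DenselyOrdered α] [SeparableSpace α] {S : Set (Set α)} (hdisj : S.Pairwise Disjoint)
    (hconn : ∀ s ∈ S, s.OrdConnected) (hcount : {s ∈ S | ∃ x, s = {x}}.Countable) :
    S.Countable := by
  refine (((countable_setOf_nontrivial_of_ordConnected hdisj hconn).union hcount).insert ∅).mono
    fun s hs => ?_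
  rcases s.subsingleton_or_nontrivial with hsub | hnt
  · exact hsub.eq_empty_or_singleton.imp_right fun hx => Or.inr ⟨hs, hx⟩
  · exact Or.inr (Or.inl ⟨hs, hnt⟩)

theorem mem_of_countable_closed_partition_of_ordConnected [ConditionallyCompleteLinearOrder α]
    [OrderTopology α] [DenselyOrdered α] {I : Set α} (hI : I.OrdConnected) (hne : I.Nonempty)
    {S : Set (Set α)} (hcount : S.Countable) (hdisj : S.Pairwise Disjoint)
    (hclosed : ∀ s ∈ S, IsClosed s) (hcover : ⋃₀ S = I) : I ∈ S := by
  let : Inhabited I := ⟨⟨_, hne.some_mem⟩⟩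
  have : LocallyConnectedSpace I := locallyConnectedSpace_of_denselyOrdered
  have : LocallyCompactSpace I := locallyCompactSpace_of_compactIccSpace
  exact mem_of_countable_closed_partition ⟨hne, hI.isPreconnected⟩
    (fun _ => baireSpace_of_isClosed_of_locallyCompactSpace) hcount hdisj hclosed hcover

theorem uncountably_many_singletons_of_partition_Ioo_general [ConditionallyCompleteLinearOrder α]
    [OrderTopology α] [DenselyOrdered α] [SeparableSpace α] {I : Set α} (hI : I.OrdConnected)
    (hne : I.Nonempty) {S : Set (Set α)} (hdisj : S.Pairwise Disjoint) (hcover : ⋃₀ S = I)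
    (hconn : ∀ s ∈ S, s.OrdConnected) (hclosed : ∀ s ∈ S, IsClosed s) (hIS : I ∉ S) :
    ¬ {s ∈ S | ∃ x, s = {x}}.Countable := fun hcount =>
  hIS <| mem_of_countable_closed_partition_of_ordConnected hI hne
    (countable_of_countable_singletons hdisj hconn hcount) hdisj hclosed hcover

end Order

/-- If `S` is a partition of an open interval `(a,b)` (with `a < b`) into closed
segments `[c,d]` (`c ≤ d`), then `S` contains uncountably many singleton members. -/
theorem uncountably_many_singletons_of_partition_Ioo (a b : ℝ) (hab : a < b)
    (S : Set (Set ℝ))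
    (hdisj : S.Pairwise Disjoint)
    (hcover : ⋃₀ S = Set.Ioo a b)
    (hseg : ∀ s ∈ S, ∃ c d : ℝ, c ≤ d ∧ s = Set.Icc c d) :
    ¬ ({s ∈ S | ∃ x : ℝ, s = {x}}).Countable := by
  have hconn : ∀ s ∈ S, s.OrdConnected := fun s hs =>
    let ⟨_, _, _, h⟩ := hseg s hs
    h ▸ ordConnected_Icc
  have hclosed : ∀ s ∈ S, IsClosed s := fun s hs =>
    let ⟨_, _, _, h⟩ := hseg s hs
    h ▸ isClosed_Icc
  exact uncountably_many_singletons_of_partition_Ioo_general ordConnected_Ioo (nonempty_Ioo.2 hab)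
    hdisj hcover hconn hclosed fun h => (isClosed_Ioo_iff.1 (hclosed _ h)).not_gt hab
end

section
/- Let D = [0,1] × [0,1] ⊆ ℝ² and let S ⊆ D be downward closed within D: if x ∈ S, y ∈ D and y ≤ x in the product order, then y ∈ S. Let l = {(x, m·x + c) : x ∈ ℝ} be a slower-than-light line, i.e., m > 0. If l meets S and l also meets D ∖ S, then the intersection of l with the boundary of S in D (the frontier of S in the subspace topology on D) consists of exactly one point. -/
/-- The closed unit square `D = [0,1] × [0,1] ⊆ ℝ²`. -/
def unitSquare : Set (ℝ × ℝ) := Set.Icc 0 1 ×ˢ Set.Icc 0 1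

/-!
A point strictly below a closure point `q` of `S` in both coordinates lies below every point close
enough to `q`, together with a whole neighbourhood, and so is interior to `S`. Along a strictly
increasing curve any two points are comparable in this strong sense, so at most one of them lies on
the frontier; that there is one is the connectedness of the part of the curve inside `D`.
-/

open Set Topology

theorem inter_frontier_nonempty_of_isPreconnected {X : Type*} [TopologicalSpace X] {T S : Set X}
    (hT : IsPreconnected T) (hS : (T ∩ S).Nonempty) (hSc : (T ∩ Sᶜ).Nonempty) :
    (T ∩ frontier S).Nonempty := by
  obtain ⟨a, haT, haS⟩ := hS
  obtain ⟨b, hbT, hbS⟩ := hSc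
  have : PreconnectedSpace T := isPreconnected_iff_preconnectedSpace.1 hT
  have hne_univ : ((↑) ⁻¹' S : Set T) ≠ univ := (ne_univ_iff_exists_notMem _).2 ⟨⟨b, hbT⟩, hbS⟩
  obtain ⟨x, hx⟩ := nonempty_frontier_iff.2 ⟨⟨⟨a, haT⟩, haS⟩, hne_univ⟩
  exact ⟨x, x.2, continuous_subtype_val.frontier_preimage_subset S hx⟩

section StablyLE

variable {X : Type*} [TopologicalSpace X] [Preorder X]

/-- `p` is stably below `q` if the relation `p ≤ q` survives all small perturbations of both points,
that is, if `(p, q)` is interior to the graph of `≤`. In the plane with the componentwise order this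
is the chronological order of the light cone: both coordinates increase strictly. -/
def StablyLE (p q : X) : Prop :=
  ∀ᶠ z in 𝓝 (p, q), z.1 ≤ z.2

theorem StablyLE.mem_interior {S : Set X} {p q : X} (hpq : StablyLE p q) (hS : IsLowerSet S)
    (hq : q ∈ closure S) : p ∈ interior S := by
  rw [mem_interior_iff_mem_nhds]
  filter_upwards [hpq.curry_nhds] with x hx
  obtain ⟨y, hyS, hxy⟩ := ((mem_closure_iff_frequently.1 hq).and_eventually hx).exists
  exact hS hxy hyS

theorem StablyLE.subtype {D : Set X} {p q : D} (h : StablyLE (p : X) q) : StablyLE p q :=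
  (continuous_subtype_val.prodMap continuous_subtype_val).tendsto (p, q) |>.eventually h

theorem subsingleton_inter_frontier_of_isChain {S T : Set X} (hS : IsLowerSet S)
    (hT : IsChain StablyLE T) : (T ∩ frontier S).Subsingleton := by
  rintro x ⟨hxT, hx⟩ y ⟨hyT, hy⟩
  by_contra hne
  rcases hT hxT hyT hne with hxy | hyx
  · exact hx.2 (hxy.mem_interior hS hy.1)
  · exact hy.2 (hyx.mem_interior hS hx.1)

theorem existsUnique_mem_and_mem_frontier {S T : Set X} (hS : IsLowerSet S)
    (hchain : IsChain StablyLE T) (hconn : IsPreconnected T) (hTS : (T ∩ S).Nonempty)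
    (hTSc : (T ∩ Sᶜ).Nonempty) : ∃! x, x ∈ T ∧ x ∈ frontier S := by
  obtain ⟨x, hx⟩ := inter_frontier_nonempty_of_isPreconnected hconn hTS hTSc
  exact ⟨x, hx, fun _ hy => subsingleton_inter_frontier_of_isChain hS hchain hy hx⟩

end StablyLE

section Prod

variable {α β : Type*} [TopologicalSpace α] [LinearOrder α] [OrderClosedTopology α]
  [TopologicalSpace β] [LinearOrder β] [OrderClosedTopology β]

theorem stablyLE_of_fst_lt_of_snd_lt {p q : α × β} (h₁ : p.1 < q.1) (h₂ : p.2 < q.2) :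
    StablyLE p q := by
  have hfst : ∀ᶠ z : (α × β) × (α × β) in 𝓝 (p, q), z.1.1 < z.2.1 :=
    ContinuousAt.eventually_lt (by fun_prop) (by fun_prop) h₁
  have hsnd : ∀ᶠ z : (α × β) × (α × β) in 𝓝 (p, q), z.1.2 < z.2.2 :=
    ContinuousAt.eventually_lt (by fun_prop) (by fun_prop) h₂
  filter_upwards [hfst, hsnd] with z hz₁ hz₂ using ⟨hz₁.le, hz₂.le⟩

theorem isChain_stablyLE_graph {f : α → β} (hf : StrictMono f) :
    IsChain StablyLE {p : α × β | p.2 = f p.1} := by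
  have hlt {p q : α × β} (hp : p.2 = f p.1) (hq : q.2 = f q.1) (h : p.1 < q.1) : StablyLE p q :=
    stablyLE_of_fst_lt_of_snd_lt h (hp ▸ hq ▸ hf h)
  intro p hp q hq hne
  have hfst : p.1 ≠ q.1 := fun h => hne (Prod.ext h (by rw [hp, hq, h]))
  exact hfst.lt_or_gt.imp (hlt hp hq) (hlt hq hp)

end Prod

theorem isPreconnected_inter_graph {α β : Type*}
    [ConditionallyCompleteLinearOrder α] [DenselyOrdered α] [TopologicalSpace α] [OrderTopology α]
    [Preorder β] [TopologicalSpace β] {D : Set (α × β)} (hD : D.OrdConnected)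
    {f : α → β} (hf : Monotone f) (hfc : Continuous f) :
    IsPreconnected (D ∩ {p | p.2 = f p.1}) := by
  have hpre : ((fun x => (x, f x)) ⁻¹' D).OrdConnected :=
    hD.preimage_mono (monotone_id.prodMk hf)
  have himage : (fun x => (x, f x)) '' ((fun x => (x, f x)) ⁻¹' D) = D ∩ {p | p.2 = f p.1} := by
    ext ⟨x, y⟩
    aesop
  exact himage ▸ hpre.isPreconnected.image _ (by fun_prop)

theorem slower_than_light_line_meets_boundary_once_general {α β : Type*}
    [ConditionallyCompleteLinearOrder α] [DenselyOrdered α] [TopologicalSpace α] [OrderTopology α]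
    [LinearOrder β] [TopologicalSpace β] [OrderClosedTopology β]
    {D S : Set (α × β)} (hD : D.OrdConnected) (hSD : S ⊆ D)
    (hS : ∀ x ∈ S, ∀ y ∈ D, y ≤ x → y ∈ S)
    {f : α → β} (hf : StrictMono f) (hfc : Continuous f)
    (hmeet : ({p | p.2 = f p.1} ∩ S).Nonempty) (hleave : ({p | p.2 = f p.1} ∩ (D \ S)).Nonempty) :
    ∃! x : D, (x : α × β) ∈ {p : α × β | p.2 = f p.1} ∧ x ∈ frontier {y : D | (y : α × β) ∈ S} := by
  have hlower : IsLowerSet {y : D | (y : α × β) ∈ S} := fun x y hyx hx => hS x hx y y.2 hyx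
  have hchain : IsChain StablyLE {x : D | (x : α × β) ∈ {p : α × β | p.2 = f p.1}} :=
    fun x hx y hy hne => (isChain_stablyLE_graph hf hx hy (Subtype.coe_ne_coe.2 hne)).imp
      StablyLE.subtype StablyLE.subtype
  have hconn : IsPreconnected {x : D | (x : α × β) ∈ {p : α × β | p.2 = f p.1}} := by
    rw [← IsInducing.subtypeVal.isPreconnected_image]
    exact Subtype.image_preimage_coe D _ ▸ isPreconnected_inter_graph hD hf.monotone hfc
  obtain ⟨a, hal, haS⟩ := hmeet
  obtain ⟨b, hbl, hbD, hbS⟩ := hleave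
  exact existsUnique_mem_and_mem_frontier hlower hchain hconn
    ⟨⟨a, hSD haS⟩, hal, haS⟩ ⟨⟨b, hbD⟩, hbl, hbS⟩

theorem ordConnected_unitSquare : unitSquare.OrdConnected := by
  rw [unitSquare, Icc_prod_Icc]
  exact ordConnected_Icc

/-- Let `S` be a downward closed subset of the closed unit square `D` (with respect
to the componentwise order), and let `l` be a slower-than-light line `y = m·x + c`
with `m > 0`.  If `l` meets `S` and also meets `D ∖ S`, then `l` meets the boundary
(frontier) of `S` in the subspace topology on `D` in exactly one point. -/
theorem slower_than_light_line_meets_boundary_once (S : Set (ℝ × ℝ))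
    (hSD : S ⊆ unitSquare)
    (hdc : ∀ x ∈ S, ∀ y ∈ unitSquare, y ≤ x → y ∈ S)
    (m c : ℝ) (hm : 0 < m)
    (h1 : ({p : ℝ × ℝ | p.2 = m * p.1 + c} ∩ S).Nonempty)
    (h2 : ({p : ℝ × ℝ | p.2 = m * p.1 + c} ∩ (unitSquare \ S)).Nonempty) :
    ∃! x : unitSquare, (x : ℝ × ℝ) ∈ {p : ℝ × ℝ | p.2 = m * p.1 + c} ∧
      x ∈ frontier {y : unitSquare | (y : ℝ × ℝ) ∈ S} := by
  have hline : StrictMono fun x => m * x + c := (strictMono_mul_left_of_pos hm).add_const c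
  exact slower_than_light_line_meets_boundary_once_general ordConnected_unitSquare hSD hdc hline
    (by fun_prop) h1 h2
end

section
/- Let D = {(x,y) ∈ ℝ² : y > x} be the open half-plane above the diagonal. A purely modal formula φ (a temporal formula containing no occurrence of the past operator P) is satisfiable over (ℝ², ≤) if and only if it is satisfiable over (D, ≤), where ≤ is the componentwise order on ℝ² (restricted to D in the second frame). -/
namespace Temporal

/-- Temporal propositional formulas: `φ ::= q | ¬φ | φ∨φ' | Fφ | Pφ`. -/
inductive TForm : Type
  | prop : ℕ → TForm
  | neg : TForm → TForm
  | or : TForm → TForm → TForm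
  | fut : TForm → TForm
  | past : TForm → TForm
  deriving DecidableEq

/-- Truth of a temporal formula at a point of a Kripke structure. -/
def TSat {X : Type*} (R : X → X → Prop) (v : ℕ → Set X) : TForm → X → Prop
  | .prop n, x => x ∈ v n
  | .neg φ, x => ¬ TSat R v φ x
  | .or φ ψ, x => TSat R v φ x ∨ TSat R v ψ x
  | .fut φ, x => ∃ y, R x y ∧ TSat R v φ y
  | .past φ, x => ∃ y, R y x ∧ TSat R v φ y

/-- Validity of a temporal formula over a Kripke frame. -/
def TValid {X : Type*} (R : X → X → Prop) (φ : TForm) : Prop :=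
  ∀ (v : ℕ → Set X) (x : X), TSat R v φ x

/-- Satisfiability of a temporal formula over a Kripke frame. -/
def TSatisfiable {X : Type*} (R : X → X → Prop) (φ : TForm) : Prop :=
  ∃ (v : ℕ → Set X) (x : X), TSat R v φ x

/-- An explicit encoding of temporal formulas as natural numbers. -/
def encodeT : TForm → ℕ
  | .prop n => 5 * n
  | .neg φ => 5 * encodeT φ + 1
  | .or φ ψ => 5 * Nat.pair (encodeT φ) (encodeT ψ) + 2
  | .fut φ => 5 * encodeT φ + 3
  | .past φ => 5 * encodeT φ + 4

/-- The inverse decoding of natural numbers as temporal formulas. -/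
def decodeT (n : ℕ) : TForm :=
  if h0 : n % 5 = 0 then .prop (n / 5)
  else
    have hn : 0 < n := Nat.pos_of_ne_zero (by rintro rfl; simp at h0)
    have hlt : n / 5 < n := Nat.div_lt_self hn (by norm_num)
    have h1 : (n / 5).unpair.1 < n := lt_of_le_of_lt (Nat.unpair_left_le _) hlt
    have h2 : (n / 5).unpair.2 < n := lt_of_le_of_lt (Nat.unpair_right_le _) hlt
    if n % 5 = 1 then .neg (decodeT (n / 5))
    else if n % 5 = 2 then .or (decodeT (n / 5).unpair.1) (decodeT (n / 5).unpair.2)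
    else if n % 5 = 3 then .fut (decodeT (n / 5))
    else .past (decodeT (n / 5))

theorem decodeT_encodeT (φ : TForm) : decodeT (encodeT φ) = φ := by
  induction φ with
  | prop n => rw [encodeT, decodeT]; simp [Nat.mul_div_cancel_left, Nat.mul_mod_right]
  | neg φ ih => rw [encodeT, decodeT]; simp [Nat.mul_add_mod, Nat.mul_add_div, ih]
  | or φ ψ ih1 ih2 => rw [encodeT, decodeT]; simp [Nat.mul_add_mod, Nat.mul_add_div, ih1, ih2]
  | fut φ ih => rw [encodeT, decodeT]; simp [Nat.mul_add_mod, Nat.mul_add_div, ih]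
  | past φ ih => rw [encodeT, decodeT]; simp [Nat.mul_add_mod, Nat.mul_add_div, ih]

theorem encodeT_decodeT (n : ℕ) : encodeT (decodeT n) = n := by
  induction n using Nat.strong_induction_on with
  | _ n ih =>
    rw [decodeT]
    by_cases h0 : n % 5 = 0
    · simp only [h0, dif_pos]
      rw [encodeT]
      omega
    · have hn : 0 < n := Nat.pos_of_ne_zero (by rintro rfl; simp at h0)
      have hlt : n / 5 < n := Nat.div_lt_self hn (by norm_num)
      have h1 : (n / 5).unpair.1 < n := lt_of_le_of_lt (Nat.unpair_left_le _) hlt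
      have h2 : (n / 5).unpair.2 < n := lt_of_le_of_lt (Nat.unpair_right_le _) hlt
      rw [dif_neg h0]
      by_cases e1 : n % 5 = 1
      · rw [if_pos e1, encodeT, ih _ hlt]
        omega
      · rw [if_neg e1]
        by_cases e2 : n % 5 = 2
        · rw [if_pos e2, encodeT, ih _ h1, ih _ h2, Nat.pair_unpair]
          omega
        · rw [if_neg e2]
          by_cases e3 : n % 5 = 3
          · rw [if_pos e3, encodeT, ih _ hlt]
            omega
          · rw [if_neg e3, encodeT, ih _ hlt]
            omega

instance : Encodable TForm :=
  ⟨encodeT, fun n => some (decodeT n), fun φ => congrArg some (decodeT_encodeT φ)⟩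

instance : Denumerable TForm :=
  ⟨fun n => ⟨decodeT n, rfl, encodeT_decodeT n⟩⟩


/-- A purely modal formula: a temporal formula with no occurrence of the past
operator `P`. -/
def noPast : TForm → Prop
  | .prop _ => True
  | .neg φ => noPast φ
  | .or φ ψ => noPast φ ∧ noPast ψ
  | .fut φ => noPast φ
  | .past _ => False

/-!
Satisfiability of a modal formula `φ` over either frame amounts to satisfiability over some directed
preorder, i.e. in the logic S4.2. Given a model of `φ` on a directed preorder `W`, the points of the
plane are labelled by points of `W` in such a way that `Fψ` holds at the label of a point exactly
when `ψ` holds at the label of some point above it, for each `Fψ` occurring in `φ`.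

A point `p` with `p.1 < -p.2` is read as the interval `[p.1, -p.2)`; going up in the plane shrinks
the interval. Label the triadic intervals of level `n + 1` recursively: a middle third is labelled
by a witness, for the `n`-th formula of a list in which every formula recurs, above the label of the
triadic interval that it subdivides, and an outer third keeps that label. An arbitrary interval gets
the label of the smallest triadic interval around it. It contains an endpoint of the next level
in its interior, and from one of its two sides this endpoint is approached by outer thirds only; so
all sufficiently late witnesses occur as labels of subintervals.

The points with `-p.2 ≤ p.1` see no intervals. They are labelled by witnesses above one fixed
point of `W`, chosen by directedness to satisfy, among the `Fψ` occurring in `φ`, only those that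
hold throughout the model.
-/

section ModalLogic

variable {X W : Type*}

/-- The formulas `ψ` such that `Fψ` is a subformula of the given formula. Occurrences below the past
operator are irrelevant for purely modal formulas and are not recorded. -/
def TForm.futureBodies : TForm → Finset TForm
  | .prop _ => ∅
  | .neg φ => φ.futureBodies
  | .or φ ψ => φ.futureBodies ∪ ψ.futureBodies
  | .fut φ => insert φ φ.futureBodies
  | .past _ => ∅

theorem TSat_preimage_iff {R : X → X → Prop} {S : W → W → Prop} {v : ℕ → Set W} {f : X → W}
    {φ : TForm} (hφ : noPast φ)
    (hf : ∀ ψ ∈ φ.futureBodies, ∀ x, TSat S v (.fut ψ) (f x) ↔ ∃ y, R x y ∧ TSat S v ψ (f y))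
    (x : X) : TSat R (fun n => f ⁻¹' v n) φ x ↔ TSat S v φ (f x) := by
  induction φ generalizing x with
  | prop n => rfl
  | neg φ ih => exact not_congr (ih hφ hf x)
  | or φ ψ ihφ ihψ =>
    exact or_congr (ihφ hφ.1 (fun χ hχ => hf χ (Finset.mem_union_left _ hχ)) x)
      (ihψ hφ.2 (fun χ hχ => hf χ (Finset.mem_union_right _ hχ)) x)
  | fut φ ih =>
    rw [hf φ (Finset.mem_insert_self _ _) x]
    exact exists_congr fun y =>
      and_congr_right' (ih hφ (fun χ hχ => hf χ (Finset.mem_insert_of_mem hχ)) y)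
  | past φ => exact hφ.elim

variable [Preorder W]

theorem TSat_fut_of_le {v : ℕ → Set W} {ψ : TForm} {a b : W} (hab : a ≤ b)
    (hb : TSat (· ≤ ·) v (.fut ψ) b) : TSat (· ≤ ·) v (.fut ψ) a :=
  hb.imp fun _ h => ⟨hab.trans h.1, h.2⟩

theorem exists_ge_TSat_of_TSat_fut (v : ℕ → Set W) (ψ : TForm) (a : W) :
    ∃ b, a ≤ b ∧ (TSat (· ≤ ·) v (.fut ψ) a → TSat (· ≤ ·) v ψ b) := by
  by_cases ha : TSat (· ≤ ·) v (.fut ψ) a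
  · exact ha.imp fun _ h => ⟨h.1, fun _ => h.2⟩
  · exact ⟨a, le_rfl, fun h => absurd h ha⟩

end ModalLogic

theorem exists_forall_mem_imp_eq_top {ι W : Type*} [Finite ι] [Preorder W] [IsDirectedOrder W]
    [Nonempty W] (A : ι → LowerSet W) : ∃ w, ∀ i, w ∈ A i → A i = ⊤ := by
  have exists_refuter (i : ι) : ∃ u, u ∈ A i → A i = ⊤ := by
    by_contra! h
    exact (h (Classical.arbitrary W)).2 (LowerSet.ext (Set.eq_univ_of_forall fun u => (h u).1))
  choose u hu using exists_refuter
  obtain ⟨w, hw⟩ := Finite.exists_le u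
  exact ⟨w, fun i hi => hu i ((A i).lower (hw i) hi)⟩

theorem exists_forall_TSat_fut_imp_forall {W : Type*} [Preorder W] [IsDirectedOrder W] [Nonempty W]
    (v : ℕ → Set W) (Φ : Finset TForm) :
    ∃ w, ∀ ψ ∈ Φ, TSat (· ≤ ·) v (.fut ψ) w → ∀ u, TSat (· ≤ ·) v (.fut ψ) u := by
  obtain ⟨w, hw⟩ := exists_forall_mem_imp_eq_top
    fun ψ : Φ => ⟨{u | TSat (· ≤ ·) v (.fut ψ) u}, fun _ _ => TSat_fut_of_le⟩
  exact ⟨w, fun ψ hψ hwψ u => Set.eq_univ_iff_forall.1 (congrArg SetLike.coe (hw ⟨ψ, hψ⟩ hwψ)) u⟩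

open Filter

theorem exists_seq_forall_frequently_eq (α : Type*) [Countable α] [Nonempty α] :
    ∃ c : ℕ → α, ∀ a, ∃ᶠ n in atTop, c n = a := by
  obtain ⟨f, hf⟩ := exists_surjective_nat α
  refine ⟨fun n => f n.unpair.1, fun a => frequently_atTop.2 fun N => ?_⟩
  obtain ⟨k, rfl⟩ := hf a
  exact ⟨Nat.pair k N, Nat.right_le_pair k N, by simp only [Nat.unpair_pair]⟩

section Labelling

variable {W : Type*} (step : ℕ → W → W) (w₀ : W)

/-- The label of the `k`-th triadic interval `[k / 3 ^ n, (k + 1) / 3 ^ n)` of level `n`: passing to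
its middle third applies `step n`, passing to an outer third changes nothing. -/
def triadicLabel : ℕ → ℤ → W
  | 0, _ => w₀
  | n + 1, k => if k % 3 = 1 then step n (triadicLabel n (k / 3)) else triadicLabel n (k / 3)

theorem triadicLabel_succ_of_emod_eq_one {n : ℕ} {k : ℤ} (hk : k % 3 = 1) :
    triadicLabel step w₀ (n + 1) k = step n (triadicLabel step w₀ n (k / 3)) :=
  if_pos hk

theorem triadicLabel_succ_of_emod_ne_one {n : ℕ} {k : ℤ} (hk : k % 3 ≠ 1) :
    triadicLabel step w₀ (n + 1) k = triadicLabel step w₀ n (k / 3) :=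
  if_neg hk

theorem triadicLabel_add_three_pow_mul (n i : ℕ) (k : ℤ) :
    triadicLabel step w₀ (n + i) (3 ^ i * k) = triadicLabel step w₀ n k := by
  induction i with
  | zero => simp
  | succ i ih =>
    have hdigit : (3 ^ (i + 1) * k : ℤ) = 3 * (3 ^ i * k) := by ring
    rw [← add_assoc, triadicLabel_succ_of_emod_ne_one step w₀ (by omega), ← ih]
    congr 1
    omega

theorem triadicLabel_add_three_pow_mul_sub_one (n i : ℕ) (k : ℤ) :
    triadicLabel step w₀ (n + i) (3 ^ i * k - 1) = triadicLabel step w₀ n (k - 1) := by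
  induction i with
  | zero => simp
  | succ i ih =>
    have hdigit : (3 ^ (i + 1) * k : ℤ) = 3 * (3 ^ i * k) := by ring
    rw [← add_assoc, triadicLabel_succ_of_emod_ne_one step w₀ (by omega), ← ih]
    congr 1
    omega

variable {K : Type*} [Field K] [LinearOrder K] [IsStrictOrderedRing K] [FloorRing K]

theorem floor_three_pow_mul (n : ℕ) (x : K) : ⌊3 ^ n * x⌋ = ⌊3 ^ (n + 1) * x⌋ / 3 := by
  rw [show 3 ^ n * x = 3 ^ (n + 1) * x / (3 : ℕ) by push_cast; ring, Int.floor_div_natCast]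
  rfl

theorem monotone_triadicLabel_floor [Preorder W] {step : ℕ → W → W} (hstep : ∀ n w, w ≤ step n w)
    (x : K) : Monotone fun n => triadicLabel step w₀ n ⌊3 ^ n * x⌋ := by
  refine monotone_nat_of_le_succ fun n => ?_
  rw [floor_three_pow_mul n x, triadicLabel]
  split_ifs
  exacts [hstep _ _, le_rfl]

/-- `[x, z)` lies in a single triadic interval of level `n`, which is then the one containing
`x`. -/
def FitsTriadic (n : ℕ) (x z : K) : Prop :=
  3 ^ n * z ≤ ⌊3 ^ n * x⌋ + 1

theorem FitsTriadic.floor_eq {n : ℕ} {x x' z : K} (h : FitsTriadic n x z) (hx : x ≤ x')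
    (hz : x' < z) : ⌊3 ^ n * x'⌋ = ⌊3 ^ n * x⌋ := by
  refine Int.floor_eq_iff.2 ⟨(Int.floor_le _).trans (by gcongr), lt_of_lt_of_le ?_ h⟩
  gcongr

theorem FitsTriadic.mono {n : ℕ} {x x' z z' : K} (h : FitsTriadic n x z) (hx : x ≤ x')
    (hlt : x' < z') (hz : z' ≤ z) : FitsTriadic n x' z' := by
  rw [FitsTriadic, h.floor_eq hx (hlt.trans_le hz)]
  exact le_trans (by gcongr) h

theorem FitsTriadic.three_pow_mul_sub_le_one {n : ℕ} {x z : K} (h : FitsTriadic n x z) :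
    3 ^ n * (z - x) ≤ 1 := by
  unfold FitsTriadic at h
  linarith [Int.floor_le (3 ^ n * x)]

theorem bddAbove_setOf_fitsTriadic {x z : K} (h : x < z) : BddAbove {n | FitsTriadic n x z} := by
  obtain ⟨N, hN⟩ := pow_unbounded_of_one_lt (1 / (z - x)) (by norm_num : (1 : K) < 3)
  refine ⟨N, fun n hn => ?_⟩
  have hpow : (3 : K) ^ n < 3 ^ N :=
    ((le_div_iff₀ (sub_pos.2 h)).2 hn.three_pow_mul_sub_le_one).trans_lt hN
  exact ((pow_lt_pow_iff_right₀ (by norm_num)).1 hpow).le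

/-- The level of the smallest triadic interval containing `[x, z)`. It is `0` if there is none; this
is harmless, because all triadic intervals of level `0` have the same label. -/
noncomputable def triadicLevel (x z : K) : ℕ :=
  sSup {n | FitsTriadic n x z}

theorem FitsTriadic.le_triadicLevel {n : ℕ} {x z : K} (h : FitsTriadic n x z) (hlt : x < z) :
    n ≤ triadicLevel x z :=
  le_csSup (bddAbove_setOf_fitsTriadic hlt) h

theorem triadicLevel_eq_zero_or_fitsTriadic {x z : K} (h : x < z) :
    triadicLevel x z = 0 ∨ FitsTriadic (triadicLevel x z) x z := by
  rcases {n | FitsTriadic n x z}.eq_empty_or_nonempty with hs | hs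
  · exact .inl (by rw [triadicLevel, hs, csSup_empty, Nat.bot_eq_zero])
  · exact .inr (Nat.sSup_mem hs (bddAbove_setOf_fitsTriadic h))

theorem triadicLevel_triadic (n : ℕ) (k : ℤ) :
    triadicLevel (k / 3 ^ n : K) ((k + 1) / 3 ^ n) = n := by
  have hlt : (k / 3 ^ n : K) < (k + 1) / 3 ^ n := by gcongr; exact lt_add_one _
  have hfits : FitsTriadic n (k / 3 ^ n : K) ((k + 1) / 3 ^ n) := by
    simp [FitsTriadic, mul_div_cancel₀]
  refine le_antisymm (csSup_le ⟨n, hfits⟩ fun m hm => ?_) (hfits.le_triadicLevel hlt)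
  have hlen := hm.three_pow_mul_sub_le_one
  rw [← sub_div, add_sub_cancel_left, mul_one_div, div_le_one (by positivity)] at hlen
  exact (pow_le_pow_iff_right₀ (by norm_num)).1 hlen

/-- The label of the interval `[x, z)`: that of the smallest triadic interval containing it. -/
noncomputable def intervalLabel (x z : K) : W :=
  triadicLabel step w₀ (triadicLevel x z) ⌊3 ^ triadicLevel x z * x⌋

theorem intervalLabel_triadic (n : ℕ) (k : ℤ) :
    intervalLabel step w₀ (k / 3 ^ n : K) ((k + 1) / 3 ^ n) = triadicLabel step w₀ n k := by
  rw [intervalLabel, triadicLevel_triadic, mul_div_cancel₀ _ (by positivity), Int.floor_intCast]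

theorem intervalLabel_mono [Preorder W] {step : ℕ → W → W} (hstep : ∀ n w, w ≤ step n w)
    {x x' z z' : K} (hx : x ≤ x') (hlt : x' < z') (hz : z' ≤ z) :
    intervalLabel step w₀ x z ≤ intervalLabel step w₀ x' z' := by
  have hmono := monotone_triadicLabel_floor w₀ hstep x'
  unfold intervalLabel
  rcases triadicLevel_eq_zero_or_fitsTriadic (hx.trans_lt (hlt.trans_le hz)) with h | h
  · rw [h]
    exact hmono (Nat.zero_le _)
  · rw [← h.floor_eq hx (hlt.trans_le hz)]
    exact hmono ((h.mono hx hlt hz).le_triadicLevel hlt)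

theorem FitsTriadic.floor_add_one_emod_three_ne_zero {n : ℕ} {x z : K} (h : FitsTriadic n x z)
    (h' : ¬FitsTriadic (n + 1) x z) : (⌊3 ^ (n + 1) * x⌋ + 1) % 3 ≠ 0 := by
  intro hdvd
  have hfloor : ⌊3 ^ (n + 1) * x⌋ + 1 = 3 * (⌊3 ^ n * x⌋ + 1) := by
    rw [floor_three_pow_mul n x]
    omega
  have hfloor' : (⌊3 ^ (n + 1) * x⌋ : K) + 1 = 3 * (⌊3 ^ n * x⌋ + 1) := mod_cast hfloor
  refine h' ?_
  rw [FitsTriadic, hfloor', pow_succ', mul_assoc]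
  exact mul_le_mul_of_nonneg_left h (by norm_num)

theorem exists_triadic_endpoint_with_adjacent_label {x z : K} (h : x < z) :
    ∃ (n : ℕ) (j : ℤ), 3 ^ n * x < j ∧ j < 3 ^ n * z ∧
      (triadicLabel step w₀ n (j - 1) = intervalLabel step w₀ x z ∨
        triadicLabel step w₀ n j = intervalLabel step w₀ x z) := by
  have hnot : ¬FitsTriadic (triadicLevel x z + 1) x z := fun hfits =>
    (hfits.le_triadicLevel h).not_gt (Nat.lt_succ_self _)
  have hlevel := triadicLevel_eq_zero_or_fitsTriadic h
  unfold intervalLabel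
  generalize triadicLevel x z = n at hnot hlevel ⊢
  refine ⟨n + 1, ⌊3 ^ (n + 1) * x⌋ + 1, by push_cast; exact Int.lt_floor_add_one _,
    by simpa [FitsTriadic] using hnot, ?_⟩
  by_cases hleft : (⌊3 ^ (n + 1) * x⌋ + 1) % 3 = 1
  · left
    rw [triadicLabel_succ_of_emod_ne_one step w₀ (by omega), add_sub_cancel_right,
      floor_three_pow_mul n x]
  · right
    rw [triadicLabel_succ_of_emod_ne_one step w₀ hleft]
    rcases hlevel with rfl | hfits
    · rfl
    · have hright := hfits.floor_add_one_emod_three_ne_zero hnot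
      rw [floor_three_pow_mul n x]
      congr 1
      omega

theorem eventually_exists_triadic_subset_triadicLabel_eq {x z : K} (h : x < z) :
    ∀ᶠ n in atTop, ∃ k : ℤ, x ≤ k / 3 ^ n ∧ (k + 1) / 3 ^ n ≤ z ∧
      triadicLabel step w₀ n k = intervalLabel step w₀ x z := by
  obtain ⟨n, j, hxj, hjz, hlabel⟩ := exists_triadic_endpoint_with_adjacent_label step w₀ h
  have eventually_fine (δ : K) (hδ : 0 < δ) : ∀ᶠ i : ℕ in atTop, 1 ≤ 3 ^ i * δ :=
    ((tendsto_pow_atTop_atTop_of_one_lt (by norm_num : (1 : K) < 3)).eventually_ge_atTop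
      (1 / δ)).mono fun i hi => (div_le_iff₀ hδ).1 hi
  have eventually_add : ∀ᶠ i in atTop, ∃ k : ℤ, x ≤ k / 3 ^ (n + i) ∧ (k + 1) / 3 ^ (n + i) ≤ z ∧
      triadicLabel step w₀ (n + i) k = intervalLabel step w₀ x z := by
    filter_upwards [eventually_fine _ (sub_pos.2 hxj), eventually_fine _ (sub_pos.2 hjz)]
      with i hx hz
    simp only [le_div_iff₀' (show (0 : K) < 3 ^ (n + i) by positivity),
      div_le_iff₀' (show (0 : K) < 3 ^ (n + i) by positivity)]
    rw [pow_add]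
    rcases hlabel with hlabel | hlabel
    · refine ⟨3 ^ i * j - 1, ?_, ?_, by rw [triadicLabel_add_three_pow_mul_sub_one, hlabel]⟩ <;>
      · push_cast
        linarith
    · refine ⟨3 ^ i * j, ?_, ?_, by rw [triadicLabel_add_three_pow_mul, hlabel]⟩ <;>
      · push_cast
        linarith
  filter_upwards [(tendsto_sub_atTop_nat n).eventually eventually_add, eventually_ge_atTop n]
    with m hm hnm
  rwa [Nat.add_sub_cancel' hnm] at hm

theorem eventually_exists_intervalLabel_eq_step {x z : K} (h : x < z) :
    ∀ᶠ n in atTop, ∃ x' z', x ≤ x' ∧ x' < z' ∧ z' ≤ z ∧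
      intervalLabel step w₀ x' z' = step n (intervalLabel step w₀ x z) := by
  filter_upwards [eventually_exists_triadic_subset_triadicLabel_eq step w₀ h]
    with n ⟨k, hxk, hkz, hlabel⟩
  refine ⟨(3 * k + 1 : ℤ) / 3 ^ (n + 1), ((3 * k + 1 : ℤ) + 1) / 3 ^ (n + 1), hxk.trans ?_, ?_,
    le_trans ?_ hkz, ?_⟩
  · rw [div_le_div_iff₀ (by positivity) (by positivity), pow_succ]
    push_cast
    nlinarith [pow_pos (zero_lt_three (α := K)) n]
  · gcongr
    exact lt_add_one _
  · rw [div_le_div_iff₀ (by positivity) (by positivity), pow_succ]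
    push_cast
    nlinarith [pow_pos (zero_lt_three (α := K)) n]
  · rw [intervalLabel_triadic, triadicLabel_succ_of_emod_eq_one step w₀ (by omega),
      show (3 * k + 1) / 3 = k by omega, hlabel]

variable (t : W)

/-- The label of a point of the plane. A point `p` with `p.1 < min (-p.2) 0` gets the label of that
interval; cutting it off at `0` keeps the points that represent its subintervals above the diagonal.
The remaining points are labelled by successors `step n t` of the fixed `t`, in horizontal
strips. -/
noncomputable def planeLabel (p : K × K) : W :=
  if p.1 < min (-p.2) 0 then intervalLabel step w₀ p.1 (min (-p.2) 0) else step ⌊p.2⌋₊ t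

omit [IsStrictOrderedRing K] in
theorem planeLabel_of_lt {p : K × K} (hp : p.1 < min (-p.2) 0) :
    planeLabel step w₀ t p = intervalLabel step w₀ p.1 (min (-p.2) 0) :=
  if_pos hp

omit [IsStrictOrderedRing K] in
theorem planeLabel_of_le {p : K × K} (hp : min (-p.2) 0 ≤ p.1) :
    planeLabel step w₀ t p = step ⌊p.2⌋₊ t :=
  if_neg hp.not_gt

theorem planeLabel_neg_one_zero : planeLabel step w₀ t ((-1, 0) : K × K) = w₀ := by
  have hlevel : triadicLevel (-1 : K) 0 = 0 := by simpa using triadicLevel_triadic (K := K) 0 (-1)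
  rw [planeLabel_of_lt step w₀ t (by simp)]
  simp [intervalLabel, hlevel, triadicLabel]

variable [Preorder W] {step}

theorem planeLabel_le_or_le (hstep : ∀ n w, w ≤ step n w) {p q : K × K} (hpq : p ≤ q) :
    planeLabel step w₀ t p ≤ planeLabel step w₀ t q ∨ t ≤ planeLabel step w₀ t q := by
  have hz : min (-q.2) 0 ≤ min (-p.2) 0 := min_le_min_right 0 (neg_le_neg hpq.2)
  rcases lt_or_ge q.1 (min (-q.2) 0) with hq | hq
  · left
    rw [planeLabel_of_lt step w₀ t hq,
      planeLabel_of_lt step w₀ t (hpq.1.trans_lt (hq.trans_le hz))]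
    exact intervalLabel_mono w₀ hstep hpq.1 hq hz
  · right
    rw [planeLabel_of_le step w₀ t hq]
    exact hstep _ _

theorem exists_le_planeLabel_eventually_eq_step (hstep : ∀ n w, w ≤ step n w) (p : K × K) :
    ∃ u ≤ planeLabel step w₀ t p, ∀ᶠ n in atTop, ∃ q, p ≤ q ∧ q.1 < q.2 ∧
      planeLabel step w₀ t q = step n u := by
  rcases lt_or_ge p.1 (min (-p.2) 0) with hp | hp
  · refine ⟨_, le_rfl, ?_⟩
    filter_upwards [eventually_exists_intervalLabel_eq_step step w₀ hp]
      with n ⟨x, z, hpx, hxz, hzp, hlabel⟩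
    obtain ⟨hz, hz₀⟩ := le_min_iff.1 hzp
    have hmin : min (- -z) 0 = z := by rw [neg_neg, min_eq_left hz₀]
    refine ⟨(x, -z), ⟨hpx, le_neg.1 hz⟩, by simp only; linarith, ?_⟩
    rw [planeLabel_of_lt step w₀ t hp, ← hlabel, planeLabel_of_lt step w₀ t (by rwa [hmin]), hmin]
  · refine ⟨t, (hstep _ _).trans_eq (planeLabel_of_le step w₀ t hp).symm, ?_⟩
    filter_upwards [tendsto_natCast_atTop_atTop.eventually_gt_atTop p.1,
      tendsto_natCast_atTop_atTop.eventually_ge_atTop p.2] with n hn₁ hn₂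
    refine ⟨(p.1, n), ⟨le_rfl, hn₂⟩, hn₁, ?_⟩
    rw [planeLabel_of_le step w₀ t ((min_le_min_right 0 (neg_le_neg hn₂)).trans hp),
      Nat.floor_natCast]

end Labelling

section Plane

universe u

variable {K : Type*} [Field K] [LinearOrder K] [IsStrictOrderedRing K]
  {X : Type u} [Preorder X] (e : X ↪o K × K) (he : {p | p.1 < p.2} ⊆ Set.range e)

include he

theorem isDirectedOrder_of_halfplane_subset_range : IsDirectedOrder X where
  directed a b := by
    set p := e a ⊔ e b
    obtain ⟨c, hc⟩ := he (show (p.1, max p.2 (p.1 + 1)) ∈ {p | p.1 < p.2} from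
      lt_max_of_lt_right (lt_add_one _))
    have hpc : p ≤ e c := hc ▸ ⟨le_rfl, le_max_left _ _⟩
    exact ⟨c, e.le_iff_le.1 (le_sup_left.trans hpc), e.le_iff_le.1 (le_sup_right.trans hpc)⟩

theorem TSatisfiable.of_isDirectedOrder [FloorRing K] {W : Type*} [Preorder W] [IsDirectedOrder W]
    {φ : TForm} (hφ : noPast φ) (h : TSatisfiable (fun a b : W => a ≤ b) φ) :
    TSatisfiable (fun a b : X => a ≤ b) φ := by
  obtain ⟨v, w₀, hw₀⟩ := h
  have : Nonempty W := ⟨w₀⟩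
  obtain ⟨c, hc⟩ := exists_seq_forall_frequently_eq TForm
  obtain ⟨t, ht⟩ := exists_forall_TSat_fut_imp_forall v φ.futureBodies
  choose witness le_witness witness_sat using exists_ge_TSat_of_TSat_fut v
  let step n := witness (c n)
  have hstep (n w) : w ≤ step n w := le_witness (c n) w
  let f (x : X) : W := planeLabel step w₀ t (e x)
  have hf : ∀ ψ ∈ φ.futureBodies, ∀ x,
      TSat (· ≤ ·) v (.fut ψ) (f x) ↔ ∃ y, x ≤ y ∧ TSat (· ≤ ·) v ψ (f y) := by
    refine fun ψ hψ x => ⟨fun hx => ?_, ?_⟩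
    · obtain ⟨u, hu, hlate⟩ := exists_le_planeLabel_eventually_eq_step w₀ t hstep (e x)
      obtain ⟨n, rfl, q, hxq, hq, hlabel⟩ := ((hc ψ).and_eventually hlate).exists
      obtain ⟨y, rfl⟩ := he hq
      refine ⟨y, e.le_iff_le.1 hxq, ?_⟩
      rw [show f y = witness (c n) u from hlabel]
      exact witness_sat _ _ (TSat_fut_of_le hu hx)
    · rintro ⟨y, hxy, hy⟩
      rcases planeLabel_le_or_le w₀ t hstep (e.le_iff_le.2 hxy) with hle | hle
      · exact ⟨f y, hle, hy⟩
      · exact ht ψ hψ ⟨f y, hle, hy⟩ (f x)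
  obtain ⟨x₀, hx₀⟩ := he (show ((-1, 0) : K × K) ∈ {p | p.1 < p.2} by simp)
  refine ⟨fun n => f ⁻¹' v n, x₀, (TSat_preimage_iff hφ hf x₀).2 ?_⟩
  rwa [show f x₀ = w₀ by simp only [f, hx₀, planeLabel_neg_one_zero]]

theorem modal_sat_R2_iff_sat_halfplane_general [FloorRing K] {φ : TForm} (hφ : noPast φ) :
    TSatisfiable (fun a b : X => a ≤ b) φ ↔
      ∃ (W : Type u) (_ : Preorder W) (_ : IsDirectedOrder W),
        TSatisfiable (fun a b : W => a ≤ b) φ :=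
  ⟨fun h => ⟨X, _, isDirectedOrder_of_halfplane_subset_range e he, h⟩,
    fun ⟨_, _, _, h⟩ => h.of_isDirectedOrder e he hφ⟩

end Plane

/-- A purely modal formula is satisfiable over `(ℝ², ≤)` iff it is satisfiable over
`(D, ≤)`, where `D = {(x,y) ∈ ℝ² : y > x}` is the open half-plane above the
diagonal and `≤` is the componentwise order (restricted to `D` in the second
frame). -/
theorem modal_sat_R2_iff_sat_halfplane (φ : TForm) (hφ : noPast φ) :
    TSatisfiable (fun p q : ℝ × ℝ => p ≤ q) φ ↔
      TSatisfiable (fun p q : {p : ℝ × ℝ // p.1 < p.2} => p.val ≤ q.val) φ := by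
  exact (modal_sat_R2_iff_sat_halfplane_general (RelEmbedding.refl _) (by simp) hφ).trans
    (modal_sat_R2_iff_sat_halfplane_general (OrderEmbedding.subtype _) (by simp) hφ).symm

end Temporal
end

section
/- Let λ : ℝ → (0,1) be an order isomorphism from ℝ onto the open interval (0,1). Let 𝓘 = {(x,y) ∈ ℝ² : x < y} (the set of intervals with real endpoints) and let A = {(x,y) ∈ ℝ² : 0 < x < 1, 0 < y < 1, x + y > 1}. Then the map f(x,y) = (1 − λ(x), λ(y)) is a bijection from 𝓘 onto A such that for all i, j ∈ 𝓘: i ⊂ j if and only if f(i) < f(j), where ⊂ is strict interval containment ((x,y) ⊂ (x',y') iff x' ≤ x, y ≤ y' and (x,y) ≠ (x',y')) and < is the irreflexive part of the componentwise order on ℝ². In particular, the frames (𝓘, ⊂) and (A, <) are isomorphic. -/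
/-!
Strict containment of intervals is the strict order of `αᵒᵈ × α`, and the reflection
`t ↦ u - t` turns the reversed order on left endpoints into the usual one. A point `(a, b)` comes
from endpoints `x` and `y` with `f x = u - a` and `f y = b`, so `u < a + b` says that `x < y`.
-/

section ReflectedEndpoints

variable {α G : Type*} [AddCommGroup G]

/-- The map `(x, y) ↦ (u - f x, f y)`, which records an interval with endpoints `x` and `y` as a
point of `G × G`. It is defined on all pairs, including those with `x ≥ y`. -/
def reflectedEndpoints (u : G) (f : α → G) (p : α × α) : G × G :=
  (u - f p.1, f p.2)

/-- The open triangle with vertices `(u, 0)`, `(0, u)` and `(u, u)`. -/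
def openTriangle [LT G] (u : G) : Set (G × G) :=
  {q | 0 < q.1 ∧ q.1 < u ∧ 0 < q.2 ∧ q.2 < u ∧ u < q.1 + q.2}

theorem reflectedEndpoints_injective (u : G) {f : α → G} (hf : Function.Injective f) :
    Function.Injective (reflectedEndpoints u f) :=
  (sub_right_injective.comp hf).prodMap hf

theorem mem_range_reflectedEndpoints {u : G} {f : α → G} {q : G × G} :
    q ∈ Set.range (reflectedEndpoints u f) ↔ u - q.1 ∈ Set.range f ∧ q.2 ∈ Set.range f := by
  constructor
  · rintro ⟨p, rfl⟩
    exact ⟨⟨p.1, (sub_sub_cancel u (f p.1)).symm⟩, p.2, rfl⟩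
  · rintro ⟨⟨x, hx⟩, y, hy⟩
    exact ⟨(x, y), Prod.ext ((congrArg (u - ·) hx).trans (sub_sub_cancel u q.1)) hy⟩

variable [PartialOrder G] [IsOrderedAddMonoid G]

theorem lt_add_reflectedEndpoints_iff {u : G} {f : α → G} {p : α × α} :
    u < (reflectedEndpoints u f p).1 + (reflectedEndpoints u f p).2 ↔ f p.1 < f p.2 := by
  rw [reflectedEndpoints, sub_add_eq_add_sub, lt_sub_iff_add_lt, add_lt_add_iff_left]

theorem mem_openTriangle_iff_mem_range {u : G} {f : α → G} (hf : Set.range f = Set.Ioo 0 u)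
    {q : G × G} :
    q ∈ openTriangle u ↔ q ∈ Set.range (reflectedEndpoints u f) ∧ u < q.1 + q.2 := by
  rw [mem_range_reflectedEndpoints, hf, Set.sub_mem_Ioo_iff_right, sub_self, sub_zero]
  simp only [openTriangle, Set.mem_ofPred_eq, Set.mem_Ioo, and_assoc]

variable [PartialOrder α]

theorem reflectedEndpoints_le_iff {u : G} (f : α ↪o G) {i j : α × α} :
    reflectedEndpoints u f i ≤ reflectedEndpoints u f j ↔ j.1 ≤ i.1 ∧ i.2 ≤ j.2 := by
  simp only [reflectedEndpoints, Prod.mk_le_mk, sub_le_sub_iff_left, f.le_iff_le]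

theorem reflectedEndpoints_lt_iff {u : G} (f : α ↪o G) {i j : α × α} :
    reflectedEndpoints u f i < reflectedEndpoints u f j ↔ j.1 ≤ i.1 ∧ i.2 ≤ j.2 ∧ i ≠ j := by
  rw [lt_iff_le_and_ne, reflectedEndpoints_le_iff,
    (reflectedEndpoints_injective u f.injective).ne_iff, and_assoc]

theorem bijOn_reflectedEndpoints_openTriangle {u : G} (f : α ↪o G)
    (hf : Set.range f = Set.Ioo 0 u) :
    Set.BijOn (reflectedEndpoints u f) {p | p.1 < p.2} (openTriangle u) := by
  have preimage_eq : reflectedEndpoints u f ⁻¹' openTriangle u = {p | p.1 < p.2} := by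
    ext p
    simp only [Set.mem_preimage, mem_openTriangle_iff_mem_range hf, Set.mem_range_self, true_and,
      lt_add_reflectedEndpoints_iff, f.lt_iff_lt, Set.mem_ofPred_eq]
  have subset_range : openTriangle u ⊆ Set.range (reflectedEndpoints u f) :=
    fun _ hq ↦ ((mem_openTriangle_iff_mem_range hf).1 hq).1
  rw [← preimage_eq, ← Set.image_preimage_eq_of_subset subset_range, Set.preimage_image_preimage]
  exact (reflectedEndpoints_injective u f.injective).injOn.bijOn_image

theorem interval_frame_iso_triangle_general {u : G} (lam : α ↪o G)
    (hrange : Set.range lam = Set.Ioo 0 u) :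
    Set.BijOn (reflectedEndpoints u lam) {p | p.1 < p.2} (openTriangle u) ∧
      ∀ i j : α × α, (j.1 ≤ i.1 ∧ i.2 ≤ j.2 ∧ i ≠ j) ↔
        reflectedEndpoints u lam i < reflectedEndpoints u lam j :=
  ⟨bijOn_reflectedEndpoints_openTriangle lam hrange,
    fun _ _ ↦ (reflectedEndpoints_lt_iff lam).symm⟩

end ReflectedEndpoints

/-- Let `λ : ℝ → (0,1)` be an order isomorphism from ℝ onto the open unit interval
(a strictly monotone map with range `(0,1)`).  Then `f(x,y) = (1 − λ(x), λ(y))` is a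
bijection from `𝓘 = {(x,y) : x < y}` (the set of intervals with real endpoints)
onto the triangle `A = {(x,y) : 0 < x < 1, 0 < y < 1, x + y > 1}`, and for all
`i, j ∈ 𝓘`, `i` is strictly contained in `j` iff `f(i) < f(j)` in the irreflexive
part of the componentwise order.  In particular the frames `(𝓘, ⊂)` and `(A, <)`
are isomorphic. -/
theorem interval_frame_iso_triangle (lam : ℝ → ℝ) (hmono : StrictMono lam)
    (hrange : Set.range lam = Set.Ioo 0 1) :
    Set.BijOn (fun p : ℝ × ℝ => ((1 - lam p.1, lam p.2) : ℝ × ℝ))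
      {p : ℝ × ℝ | p.1 < p.2}
      {p : ℝ × ℝ | 0 < p.1 ∧ p.1 < 1 ∧ 0 < p.2 ∧ p.2 < 1 ∧ 1 < p.1 + p.2} ∧
    ∀ i ∈ {p : ℝ × ℝ | p.1 < p.2}, ∀ j ∈ {p : ℝ × ℝ | p.1 < p.2},
      (j.1 ≤ i.1 ∧ i.2 ≤ j.2 ∧ i ≠ j) ↔
        (((1 - lam i.1, lam i.2) : ℝ × ℝ) ≤ ((1 - lam j.1, lam j.2) : ℝ × ℝ) ∧
          ((1 - lam i.1, lam i.2) : ℝ × ℝ) ≠ ((1 - lam j.1, lam j.2) : ℝ × ℝ)) := by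
  obtain ⟨hbij, hlt⟩ :=
    interval_frame_iso_triangle_general (OrderEmbedding.ofStrictMono lam hmono) hrange
  exact ⟨hbij, fun i _ j _ ↦ (hlt i j).trans lt_iff_le_and_ne⟩
end

section
/- Let P₁ be the finite strict partial order with ten elements u, s, p₀⁻, p₀⁺, p₁⁻, p₁⁺, p₂⁻, p₂⁺, p₃⁻, p₃⁺, whose strict order is generated transitively by u < pᵢ⁻ < pᵢ⁺ < s for each i ∈ {0,1,2,3} (so also u < pᵢ⁺, u < s, pᵢ⁻ < s), with pᵢ^± incomparable to pⱼ^± for i ≠ j. Then the temporal formula Δ(P₁) is satisfiable over (ℚ², ≤) and over (ℚ², <), but it is not satisfiable over (ℝ², ≤) and not satisfiable over (ℝ², <), where ≤ is the componentwise order (on ℚ² respectively ℝ²) and < its irreflexive part. -/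
namespace Temporal

/-- Conjunction, defined from negation and disjunction. -/
def TForm.and (a b : TForm) : TForm := .neg (.or (.neg a) (.neg b))

/-- Implication, defined from negation and disjunction. -/
def TForm.imp (a b : TForm) : TForm := .or (.neg a) b

/-- The operator `G = ¬F¬`. -/
def TForm.G (a : TForm) : TForm := .neg (.fut (.neg a))

/-- The operator `H = ¬P¬`. -/
def TForm.H (a : TForm) : TForm := .neg (.past (.neg a))

/-- Disjunction of a list of formulas (`⊥` for the empty list). -/
def bigOr : List TForm → TForm
  | [] => TForm.neg (.or (.prop 0) (.neg (.prop 0)))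
  | [a] => a
  | a :: rest => .or a (bigOr rest)

/-- Conjunction of a list of formulas (`⊤` for the empty list). -/
def bigAnd : List TForm → TForm
  | [] => TForm.or (.prop 0) (.neg (.prop 0))
  | [a] => a
  | a :: rest => TForm.and a (bigAnd rest)

/-- The formula `Δ(P)` of a finite transitive relation `P` (on `Fin n`, with a
distinct propositional variable for each element):
`Δ(P) = G H [ ⋁_{p} p ∧ ⋀_{p≠q} ¬(p∧q) ∧ ⋀_{p≠q, p<q} ((p→Fq)∧(q→Pp))
∧ ⋀_{p≠q, ¬(p<q)} ((p→G¬q)∧(q→H¬p)) ]`. -/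
def delta (n : ℕ) (lt : Fin n → Fin n → Bool) : TForm :=
  TForm.G (TForm.H (TForm.and
    (bigOr ((List.finRange n).map fun p => .prop p.val))
    (bigAnd ((List.finRange n).flatMap fun p =>
      (List.finRange n).flatMap fun q =>
        if p = q then [] else
          [TForm.and (.neg (TForm.and (.prop p.val) (.prop q.val)))
            (if lt p q then
              TForm.and (TForm.imp (.prop p.val) (.fut (.prop q.val)))
                (TForm.imp (.prop q.val) (.past (.prop p.val)))
            else
              TForm.and (TForm.imp (.prop p.val) (TForm.G (.neg (.prop q.val))))
                (TForm.imp (.prop q.val) (TForm.H (.neg (.prop p.val)))))]))))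

/-- The strict partial order `P₁`: elements `0 = u`, `1 = s`, and `2i+2 = pᵢ⁻`,
`2i+3 = pᵢ⁺` for `i ∈ {0,1,2,3}`; generated transitively by
`u < pᵢ⁻ < pᵢ⁺ < s`, with `pᵢ^±` incomparable to `pⱼ^±` for `i ≠ j`. -/
def ltP1 (a b : Fin 10) : Bool :=
  (a.val == 0 && b.val != 0) || (b.val == 1 && a.val != 1) ||
    (a.val % 2 == 0 && decide (2 ≤ a.val) && b.val == a.val + 1)

/-!
Over a directed order, `Δ(P)` is satisfiable exactly when there is a temporal morphism onto `P`.

Suppose `f` is one from the real plane to a union of at least four parallel chains with `u` and `s`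
added. Above a point of `f ⁻¹' {u}` every chain is met, at most one of them only straight above and
at most one only straight to the right, so two chains are met strictly above in both coordinates;
hence `f ⁻¹' {u}` and, dually, `f ⁻¹' {s}` are open. Each line `x.1 - x.2 = t` is connected and
linearly ordered, so it meets exactly one chain, say `T t`. The labelling `T` is constant on a
one-sided neighbourhood of every point, so the set of points near which it is not constant is
countable. Moreover, a value of `T` on a one-sided neighbourhood of `t` is also its value at `t`, so
that set is perfect. Therefore it is empty and `T` is constant, contradicting that `f` meets every
chain.

Completeness is essential: the rational plane is isomorphic to `L × Lᵒᵈ` for `L = ℚ ×ₗ ℚ`. There the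
pairs of points in the same fibre of `L → ℚ` can be put on the chains, and the fibres can be
assigned to the chains so that every chain occurs densely.
-/

section

open Filter Topology

section Semantics

variable {X : Type*} {R : X → X → Prop} {v : ℕ → Set X} {a b : TForm} {x : X}

theorem tSat_and : TSat R v (a.and b) x ↔ TSat R v a x ∧ TSat R v b x := by
  simp only [TForm.and, TSat, not_or, not_not]

theorem tSat_imp : TSat R v (a.imp b) x ↔ (TSat R v a x → TSat R v b x) :=
  imp_iff_not_or.symm

theorem tSat_G : TSat R v a.G x ↔ ∀ y, R x y → TSat R v a y := by
  simp only [TForm.G, TSat, not_exists, not_and, not_not]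

theorem tSat_H : TSat R v a.H x ↔ ∀ y, R y x → TSat R v a y := by
  simp only [TForm.H, TSat, not_exists, not_and, not_not]

theorem tSat_bigOr (l : List TForm) : TSat R v (bigOr l) x ↔ ∃ φ ∈ l, TSat R v φ x := by
  induction l with
  | nil => simp [bigOr, TSat]
  | cons a l ih => cases l <;> simp_all [bigOr, TSat]

theorem tSat_bigAnd (l : List TForm) : TSat R v (bigAnd l) x ↔ ∀ φ ∈ l, TSat R v φ x := by
  induction l with
  | nil => simp [bigAnd, TSat, Classical.em]
  | cons a l ih => cases l <;> simp_all [bigAnd, tSat_and]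

theorem tSat_delta {n : ℕ} {lt : Fin n → Fin n → Bool} :
    TSat R v (delta n lt) x ↔ ∀ z, R x z → ∀ y, R y z →
      (∃ p : Fin n, y ∈ v p) ∧ ∀ p q : Fin n, p ≠ q →
        ¬ (y ∈ v p ∧ y ∈ v q) ∧
        (lt p q → (y ∈ v p → ∃ w, R y w ∧ w ∈ v q) ∧ (y ∈ v q → ∃ w, R w y ∧ w ∈ v p)) ∧
        (¬ lt p q → (y ∈ v p → ∀ w, R y w → w ∉ v q) ∧ (y ∈ v q → ∀ w, R w y → w ∉ v p)) := by
  simp only [delta, tSat_G, tSat_H, tSat_and, tSat_bigOr, tSat_bigAnd, List.forall_mem_flatMap]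
  refine forall₄_congr fun z _ y _ => and_congr (by simp [TSat]) ?_
  simp only [List.mem_finRange, true_imp_iff]
  refine forall₂_congr fun p q => ?_
  by_cases hpq : p = q <;> by_cases hlt : lt p q <;>
    simp [hpq, hlt, tSat_and, tSat_imp, tSat_G, tSat_H, TSat]

end Semantics

/-- A temporal morphism of preorders: a monotone map with the back condition of a bounded
morphism both for `≤`, as in Mathlib's `PseudoEpimorphism`, and for `≥`, so that it preserves
the truth of formulas in both `F` and `P`. -/
structure IsTemporalMorphism {X P : Type*} [Preorder X] [Preorder P] (f : X → P) : Prop where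
  monotone : Monotone f
  exists_ge : ∀ ⦃x q⦄, f x ≤ q → ∃ y, x ≤ y ∧ f y = q
  exists_le : ∀ ⦃x q⦄, q ≤ f x → ∃ y, y ≤ x ∧ f y = q

section DeltaCharacterization

variable {X P : Type*} [PartialOrder X] [PartialOrder P] {R : X → X → Prop} {n : ℕ}
  {lt : Fin n → Fin n → Bool}

theorem IsTemporalMorphism.tSatisfiable_delta [Nonempty X] (hle : ∀ x y, R x y → x ≤ y)
    (hlt : ∀ x y, x < y → R x y) (e : P ≃ Fin n) (he : ∀ p q, lt (e p) (e q) ↔ p < q) {f : X → P}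
    (hf : IsTemporalMorphism f) : TSatisfiable R (delta n lt) := by
  refine ⟨fun k => {x | (e (f x)).val = k}, Classical.arbitrary X, tSat_delta.2 ?_⟩
  have mem (x : X) (p : P) : (e (f x)).val = (e p).val ↔ f x = p := by
    rw [Fin.val_inj, e.apply_eq_iff_eq]
  simp only [Set.mem_ofPred_eq, e.surjective.forall, e.surjective.exists, mem, e.injective.ne_iff,
    he]
  refine fun _ _ y _ => ⟨⟨f y, rfl⟩, fun p q hpq =>
    ⟨fun h => hpq (h.1.symm.trans h.2), fun hpq_lt => ?_, fun hpq_lt => ?_⟩⟩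
  · constructor
    · rintro rfl
      obtain ⟨w, hyw, rfl⟩ := hf.exists_ge hpq_lt.le
      exact ⟨w, hlt _ _ (hyw.lt_of_ne fun h => hpq (congrArg f h)), rfl⟩
    · rintro rfl
      obtain ⟨w, hwy, rfl⟩ := hf.exists_le hpq_lt.le
      exact ⟨w, hlt _ _ (hwy.lt_of_ne fun h => hpq (congrArg f h)), rfl⟩
  · constructor
    · rintro rfl w hyw rfl
      exact hpq_lt ((hf.monotone (hle _ _ hyw)).lt_of_ne hpq)
    · rintro rfl w hwy rfl
      exact hpq_lt ((hf.monotone (hle _ _ hwy)).lt_of_ne hpq)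

theorem exists_isTemporalMorphism_of_tSatisfiable_delta (hle : ∀ x y, R x y → x ≤ y)
    (hlt : ∀ x y, x < y → R x y) (hR : Directed R (id : X → X)) (e : P ≃ Fin n)
    (he : ∀ p q, lt (e p) (e q) ↔ p < q) (h : TSatisfiable R (delta n lt)) :
    ∃ f : X → P, IsTemporalMorphism f := by
  obtain ⟨v, x, hx⟩ := h
  have hv (y : X) := (hR x y).elim fun z hz => tSat_delta.1 hx z hz.1 y hz.2
  simp only [e.surjective.forall, e.surjective.exists, e.injective.ne_iff, he] at hv
  choose f hf using fun y => (hv y).1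
  have mem {y : X} {p : P} (hp : y ∈ v (e p)) : f y = p := by
    by_contra hne
    exact ((hv y).2 _ _ hne).1 ⟨hf y, hp⟩
  refine ⟨f, fun y w hyw => ?_, fun y q hq => ?_, fun y q hq => ?_⟩
  · obtain rfl | hyw := hyw.eq_or_lt
    · exact le_rfl
    by_contra hnle
    exact (((hv y).2 _ _ (ne_of_not_le hnle)).2.2 fun h => hnle h.le).1 (hf y) w (hlt _ _ hyw)
      (hf w)
  · obtain rfl | hq := hq.eq_or_lt
    · exact ⟨y, le_rfl, rfl⟩
    obtain ⟨w, hyw, hw⟩ := (((hv y).2 _ _ hq.ne).2.1 hq).1 (hf y)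
    exact ⟨w, hle _ _ hyw, mem hw⟩
  · obtain rfl | hq := hq.eq_or_lt
    · exact ⟨y, le_rfl, rfl⟩
    obtain ⟨w, hwy, hw⟩ := (((hv y).2 _ _ hq.ne).2.1 hq).2 (hf y)
    exact ⟨w, hle _ _ hwy, mem hw⟩

theorem tSatisfiable_le_delta_iff [IsDirectedOrder X] [Nonempty X] (e : P ≃ Fin n)
    (he : ∀ p q, lt (e p) (e q) ↔ p < q) :
    TSatisfiable (fun x y : X => x ≤ y) (delta n lt) ↔ ∃ f : X → P, IsTemporalMorphism f :=
  ⟨exists_isTemporalMorphism_of_tSatisfiable_delta (fun _ _ => id) (fun _ _ => le_of_lt)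
    directed_id e he,
   fun ⟨_, hf⟩ => hf.tSatisfiable_delta (fun _ _ => id) (fun _ _ => le_of_lt) e he⟩

theorem directed_lt_id [IsDirectedOrder X] [NoMaxOrder X] : Directed (· < ·) (id : X → X) := by
  intro x y
  obtain ⟨z, hxz, hyz⟩ := exists_ge_ge x y
  obtain ⟨w, hzw⟩ := exists_gt z
  exact ⟨w, hxz.trans_lt hzw, hyz.trans_lt hzw⟩

theorem tSatisfiable_lt_delta_iff [IsDirectedOrder X] [NoMaxOrder X] [Nonempty X] (e : P ≃ Fin n)
    (he : ∀ p q, lt (e p) (e q) ↔ p < q) :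
    TSatisfiable (fun x y : X => x < y) (delta n lt) ↔ ∃ f : X → P, IsTemporalMorphism f :=
  ⟨exists_isTemporalMorphism_of_tSatisfiable_delta (fun _ _ => le_of_lt) (fun _ _ => id)
    directed_lt_id e he,
   fun ⟨_, hf⟩ => hf.tSatisfiable_delta (fun _ _ => le_of_lt) (fun _ _ => id) e he⟩

end DeltaCharacterization

/-- The partial order with least element `u`, greatest element `s`, and between them one two-element
chain `lo i < hi i` for every `i : ι`, different chains being incomparable; `P₁` is the case of
four chains. -/
inductive ParallelChains (ι : Type*)
  | u
  | s
  | lo (i : ι)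
  | hi (i : ι)

namespace ParallelChains

variable {ι : Type*} {a b c : ParallelChains ι} {i j : ι}

instance : PartialOrder (ParallelChains ι) where
  le a b := a = u ∨ b = s ∨ a = b ∨ ∃ i, a = lo i ∧ b = hi i
  le_refl _ := by grind
  le_trans _ _ _ _ _ := by grind
  le_antisymm _ _ _ _ := by grind

theorem le_def : a ≤ b ↔ a = u ∨ b = s ∨ a = b ∨ ∃ i, a = lo i ∧ b = hi i := Iff.rfl

theorem u_le : u ≤ a := Or.inl rfl

theorem le_s : a ≤ s := Or.inr (Or.inl rfl)

theorem lo_le_hi : lo i ≤ hi i := by grind [le_def]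

theorem le_u_iff : a ≤ u ↔ a = u := by grind [le_def]

theorem s_le_iff : s ≤ a ↔ a = s := by grind [le_def]

/-- The element `a` lies on the `i`-th of the parallel chains. -/
def OnChain (i : ι) (a : ParallelChains ι) : Prop := a = lo i ∨ a = hi i

theorem eq_u_or_eq_s_or_onChain (a : ParallelChains ι) : a = u ∨ a = s ∨ ∃ i, OnChain i a := by
  cases a <;> simp [OnChain]

theorem OnChain.ne_u (h : OnChain i a) : a ≠ u := by grind [OnChain]

theorem OnChain.ne_s (h : OnChain i a) : a ≠ s := by grind [OnChain]

theorem OnChain.eq_of_le (ha : OnChain i a) (hb : OnChain j b) (hab : a ≤ b) : i = j := by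
  grind [le_def, OnChain]

theorem OnChain.of_mem_Icc (ha : OnChain i a) (hb : OnChain i b) (hc : c ∈ Set.Icc a b) :
    OnChain i c := by
  grind [le_def, OnChain]

theorem OnChain.eq_u_of_le_of_le (hb : OnChain i b) (hc : OnChain j c) (hij : i ≠ j)
    (hab : a ≤ b) (hac : a ≤ c) : a = u := by
  grind [le_def, OnChain]

theorem OnChain.eq_u_of_le (hb : OnChain i b) (hab : a ≤ b) (ha : ¬ OnChain i a) : a = u := by
  grind [le_def, OnChain]

theorem OnChain.eq_s_of_le (ha : OnChain i a) (hab : a ≤ b) (hb : ¬ OnChain i b) : b = s := by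
  grind [le_def, OnChain]

/-- The order-reversing involution of `ParallelChains ι`. -/
def flip : ParallelChains ι → ParallelChains ι
  | u => s
  | s => u
  | lo i => hi i
  | hi i => lo i

theorem flip_flip (a : ParallelChains ι) : a.flip.flip = a := by cases a <;> rfl

theorem flip_le_flip : a.flip ≤ b.flip ↔ b ≤ a := by
  cases a <;> cases b <;> grind [le_def, flip]

theorem flip_eq_iff : a.flip = b ↔ a = b.flip := by grind [flip_flip]

/-- The encoding of `P₁` on `Fin 10` described at `ltP1`. -/
def equivFin : ParallelChains (Fin 4) ≃ Fin 10 where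
  toFun
    | u => 0
    | s => 1
    | lo i => ⟨2 * i + 2, by lia⟩
    | hi i => ⟨2 * i + 3, by lia⟩
  invFun := ![u, s, lo 0, hi 0, lo 1, hi 1, lo 2, hi 2, lo 3, hi 3]
  left_inv a := by rcases a with _ | _ | i | i <;> (try fin_cases i) <;> rfl
  right_inv k := by fin_cases k <;> rfl

theorem ltP1_equivFin (a b : ParallelChains (Fin 4)) :
    ltP1 (equivFin a) (equivFin b) ↔ a < b := by
  rw [lt_iff_le_and_ne, le_def]
  cases a <;> cases b <;> simp [equivFin, ltP1] <;> grind

end ParallelChains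

section ConstancyLocus

variable {X α : Type*} [TopologicalSpace X] {T : X → α}

/-- The set of points near which `T` is constant, i.e. where `T` is continuous for the discrete
topology on its codomain. -/
def constancyLocus (T : X → α) : Set X := {t | ∀ᶠ r in 𝓝 t, T r = T t}

theorem mem_constancyLocus_of_eventually_eq {t : X} {k : α} (h : ∀ᶠ r in 𝓝 t, T r = k) :
    t ∈ constancyLocus T :=
  h.mono fun _ hr => hr.trans h.self_of_nhds.symm

theorem isOpen_constancyLocus : IsOpen (constancyLocus T) :=
  isOpen_iff_eventually.2 fun _ ht =>
    ht.eventually_nhds.mono fun _ => mem_constancyLocus_of_eventually_eq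

theorem eq_of_isPreconnected_of_subset_constancyLocus {S : Set X} (hS : IsPreconnected S)
    (hsub : S ⊆ constancyLocus T) {x y : X} (hx : x ∈ S) (hy : y ∈ S) : T x = T y := by
  let _ : TopologicalSpace α := ⊥
  have _ : DiscreteTopology α := ⟨rfl⟩
  refine hS.constant (fun t ht => ContinuousAt.continuousWithinAt ?_) hx hy
  rw [ContinuousAt, nhds_discrete α, tendsto_pure]
  exact hsub ht

theorem eventually_mem_constancyLocus {S : Set X} (hS : IsOpen S) {t : X} {k : α}
    (h : ∀ᶠ r in 𝓝[S] t, T r = k) : ∀ᶠ r in 𝓝[S] t, r ∈ constancyLocus T := by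
  filter_upwards [eventually_eventually_nhdsWithin.2 h, self_mem_nhdsWithin] with r hr hrS
  rw [hS.nhdsWithin_eq hrS] at hr
  exact mem_constancyLocus_of_eventually_eq hr

theorem countable_compl_constancyLocus [LinearOrder X] [OrderTopology X]
    [SecondCountableTopology X]
    (h : ∀ t, (∀ᶠ r in 𝓝[>] t, T r = T t) ∨ ∀ᶠ r in 𝓝[<] t, T r = T t) :
    (constancyLocus T)ᶜ.Countable := by
  have isolated {S : Set X} (hS : IsOpen S) {t : X} (ht : ∀ᶠ r in 𝓝[S] t, T r = T t) :
      𝓝[(constancyLocus T)ᶜ ∩ S] t = ⊥ := by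
    rw [Set.inter_comm, nhdsWithin_inter', inf_principal_eq_bot, compl_compl]
    exact eventually_mem_constancyLocus hS ht
  refine ((countable_setOfPred_isolated_right_within (s := (constancyLocus T)ᶜ)).union
    (countable_setOfPred_isolated_left_within (s := (constancyLocus T)ᶜ))).mono fun t ht => ?_
  exact (h t).imp (fun h => ⟨ht, isolated isOpen_Ioi h⟩) fun h => ⟨ht, isolated isOpen_Iio h⟩

variable [ConditionallyCompleteLinearOrder X] [OrderTopology X] [DenselyOrdered X]

theorem exists_eventually_nhdsLT_eq [NoMinOrder X] {t : X}
    (h : ∀ᶠ r in 𝓝[<] t, r ∈ constancyLocus T) : ∃ k, ∀ᶠ r in 𝓝[<] t, T r = k := by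
  obtain ⟨a, ha, hsub⟩ := mem_nhdsLT_iff_exists_Ioo_subset.1 h
  obtain ⟨m, hm⟩ := exists_between (Set.mem_Iio.1 ha)
  exact ⟨T m, mem_of_superset (Ioo_mem_nhdsLT ha) fun r hr =>
    eq_of_isPreconnected_of_subset_constancyLocus isPreconnected_Ioo hsub hr hm⟩

theorem exists_eventually_nhdsGT_eq [NoMaxOrder X] {t : X}
    (h : ∀ᶠ r in 𝓝[>] t, r ∈ constancyLocus T) : ∃ k, ∀ᶠ r in 𝓝[>] t, T r = k :=
  exists_eventually_nhdsLT_eq (X := Xᵒᵈ) (T := T ∘ OrderDual.ofDual) h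

theorem perfect_compl_constancyLocus [NoMinOrder X] [NoMaxOrder X]
    (hleft : ∀ t k, (∀ᶠ r in 𝓝[<] t, T r = k) → T t = k)
    (hright : ∀ t k, (∀ᶠ r in 𝓝[>] t, T r = k) → T t = k) :
    Perfect (constancyLocus T)ᶜ := by
  refine ⟨isOpen_constancyLocus.isClosed_compl, fun t ht => ?_⟩
  rw [accPt_iff_frequently_nhdsNE]
  by_contra hisol
  rw [not_frequently, ← nhdsLT_sup_nhdsGT, eventually_sup] at hisol
  simp only [Set.mem_compl_iff, not_not] at hisol
  obtain ⟨k, hk⟩ := exists_eventually_nhdsLT_eq hisol.1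
  obtain ⟨l, hl⟩ := exists_eventually_nhdsGT_eq hisol.2
  obtain rfl := hleft t k hk
  obtain rfl := hright t l hl
  refine ht ?_
  rw [constancyLocus, Set.mem_ofPred_eq, ← nhdsNE_sup_pure, ← nhdsLT_sup_nhdsGT]
  exact eventually_sup.2 ⟨eventually_sup.2 ⟨hk, hl⟩, rfl⟩

end ConstancyLocus

theorem eq_empty_of_perfect_of_countable {X : Type*} [MetricSpace X] [CompleteSpace X] {C : Set X}
    (hC : Perfect C) (hcount : C.Countable) : C = ∅ := by
  by_contra hne
  obtain ⟨f, hfC, -, hf⟩ := hC.exists_nat_bool_injection (Set.nonempty_iff_ne_empty.2 hne)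
  have uncountable : ¬ Countable (ℕ → Bool) := by
    rw [← Cardinal.mk_le_aleph0_iff, not_le]
    simpa using Cardinal.aleph0_lt_continuum
  rw [← Set.countable_univ_iff] at uncountable
  exact uncountable (Set.countable_of_injective_of_countable_image hf.injOn
    (hcount.mono (Set.image_univ.trans_subset hfC)))

theorem eq_of_one_sided_constancy {α : Type*} {T : ℝ → α}
    (hleft : ∀ t k, (∀ᶠ r in 𝓝[<] t, T r = k) → T t = k)
    (hright : ∀ t k, (∀ᶠ r in 𝓝[>] t, T r = k) → T t = k)
    (h : ∀ t, (∀ᶠ r in 𝓝[>] t, T r = T t) ∨ ∀ᶠ r in 𝓝[<] t, T r = T t) (t r : ℝ) : T t = T r := by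
  have hempty : (constancyLocus T)ᶜ = ∅ :=
    eq_empty_of_perfect_of_countable (perfect_compl_constancyLocus hleft hright)
      (countable_compl_constancyLocus h)
  exact eq_of_isPreconnected_of_subset_constancyLocus isPreconnected_univ
    (Set.compl_empty_iff.1 hempty).ge (Set.mem_univ t) (Set.mem_univ r)

namespace IsTemporalMorphism

open ParallelChains

theorem comp_orderIso {X Y P : Type*} [Preorder X] [Preorder Y] [Preorder P] {f : X → P}
    (hf : IsTemporalMorphism f) (e : Y ≃o X) : IsTemporalMorphism (f ∘ e) where
  monotone := hf.monotone.comp e.monotone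
  exists_ge y q hq :=
    (hf.exists_ge hq).imp' e.symm fun z hz => ⟨e.le_symm_apply.2 hz.1, by simp [hz.2]⟩
  exists_le y q hq :=
    (hf.exists_le hq).imp' e.symm fun z hz => ⟨e.symm_apply_le.2 hz.1, by simp [hz.2]⟩

variable {ι : Type*} {i : ι}

theorem exists_lt_onChain {X : Type*} [PartialOrder X] {f : X → ParallelChains ι}
    (hf : IsTemporalMorphism f) {x : X} (hx : OnChain i (f x)) :
    ∃ y z, x ∈ Set.Icc y z ∧ y < z ∧ OnChain i (f y) ∧ OnChain i (f z) := by
  obtain h | h := hx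
  · obtain ⟨z, hxz, hz⟩ := hf.exists_ge (h.trans_le lo_le_hi)
    have hne : x ≠ z := fun hne => by simp [← hne, h] at hz
    exact ⟨x, z, ⟨le_rfl, hxz⟩, hxz.lt_of_ne hne, .inl h, .inr hz⟩
  · obtain ⟨y, hyx, hy⟩ := hf.exists_le (lo_le_hi.trans_eq h.symm)
    have hne : y ≠ x := fun hne => by simp [hne, h] at hy
    exact ⟨y, x, ⟨hyx, le_rfl⟩, hyx.lt_of_ne hne, .inl hy, .inr h⟩

theorem flip {α β : Type*} [Preorder α] [Preorder β] {f : α × β → ParallelChains ι}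
    (hf : IsTemporalMorphism f) :
    IsTemporalMorphism fun x : αᵒᵈ × βᵒᵈ =>
      (f (OrderDual.ofDual x.1, OrderDual.ofDual x.2)).flip where
  monotone _ _ h := flip_le_flip.2 (hf.monotone ⟨h.1, h.2⟩)
  exists_ge x q hq := by
    obtain ⟨y, hyx, hy⟩ := hf.exists_le (flip_le_flip.1 (hq.trans_eq (flip_flip q).symm))
    exact ⟨(OrderDual.toDual y.1, OrderDual.toDual y.2), ⟨hyx.1, hyx.2⟩,
      ParallelChains.flip_eq_iff.2 hy⟩
  exists_le x q hq := by
    obtain ⟨y, hxy, hy⟩ := hf.exists_ge (flip_le_flip.1 ((flip_flip q).trans_le hq))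
    exact ⟨(OrderDual.toDual y.1, OrderDual.toDual y.2), ⟨hxy.1, hxy.2⟩,
      ParallelChains.flip_eq_iff.2 hy⟩

section LinearOrder

variable {α β : Type*} [LinearOrder α] [LinearOrder β] {f : α × β → ParallelChains ι}
  (hf : IsTemporalMorphism f)

include hf

theorem exists_strictly_above (hι : 3 < ENat.card ι) {x : α × β} (hx : f x = u) :
    ∃ i j, i ≠ j ∧ ∃ y z, f y = lo i ∧ f z = lo j ∧
      (x.1 < y.1 ∧ x.2 < y.2) ∧ x.1 < z.1 ∧ x.2 < z.2 := by
  choose y hxy hy using fun i => hf.exists_ge (hx.trans_le (u_le (a := lo i)))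
  have eq_of_le {i j : ι} (h : y i ≤ y j) : i = j :=
    OnChain.eq_of_le (.inl (hy i)) (.inl (hy j)) (hf.monotone h)
  have hfst : {i | x.1 = (y i).1}.Subsingleton := fun i (hi : _ = _) j (hj : _ = _) =>
    (le_total (y i).2 (y j).2).elim (fun h => eq_of_le ⟨(hi.symm.trans hj).le, h⟩)
      fun h => (eq_of_le ⟨(hj.symm.trans hi).le, h⟩).symm
  have hsnd : {i | x.2 = (y i).2}.Subsingleton := fun i (hi : _ = _) j (hj : _ = _) =>
    (le_total (y i).1 (y j).1).elim (fun h => eq_of_le ⟨h, (hi.symm.trans hj).le⟩)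
      fun h => (eq_of_le ⟨h, (hj.symm.trans hi).le⟩).symm
  have hcard : 1 < ({i | x.1 = (y i).1} ∪ {i | x.2 = (y i).2})ᶜ.encard := by
    by_contra! hle
    refine hι.not_ge ?_
    rw [← Set.encard_univ, ← Set.encard_add_encard_compl]
    calc _ ≤ (1 + 1 + 1 : ℕ∞) := add_le_add ((Set.encard_union_le _ _).trans (add_le_add
          (Set.encard_le_one_iff_subsingleton.2 hfst) (Set.encard_le_one_iff_subsingleton.2 hsnd)))
          hle
      _ = 3 := by norm_num
  obtain ⟨i, j, hi, hj, hij⟩ := Set.one_lt_encard_iff.1 hcard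
  have above {i : ι} (hi : i ∈ ({i | x.1 = (y i).1} ∪ {i | x.2 = (y i).2})ᶜ) :
      x.1 < (y i).1 ∧ x.2 < (y i).2 :=
    ⟨(hxy i).1.lt_of_ne fun h => hi (.inl h), (hxy i).2.lt_of_ne fun h => hi (.inr h)⟩
  exact ⟨i, j, hij, y i, y j, hy i, hy j, above hi, above hj⟩

variable [TopologicalSpace α] [TopologicalSpace β] [OrderTopology α] [OrderTopology β]

theorem isOpen_preimage_u (hι : 3 < ENat.card ι) : IsOpen (f ⁻¹' {u}) := by
  refine isOpen_iff_mem_nhds.2 fun x hx => ?_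
  obtain ⟨i, j, hij, y, z, hy, hz, hxy, hxz⟩ := hf.exists_strictly_above hι hx
  have hnhds (p : α × β) (hp : x.1 < p.1 ∧ x.2 < p.2) : Set.Iic p ∈ 𝓝 x :=
    mem_of_superset (prod_mem_nhds (Iio_mem_nhds hp.1) (Iio_mem_nhds hp.2))
      fun q hq => ⟨hq.1.le, hq.2.le⟩
  filter_upwards [hnhds y hxy, hnhds z hxz] with w hwy hwz
  exact OnChain.eq_u_of_le_of_le (.inl hy) (.inl hz) hij (hf.monotone hwy) (hf.monotone hwz)

theorem isOpen_preimage_s (hι : 3 < ENat.card ι) : IsOpen (f ⁻¹' {s}) := by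
  have h := hf.flip.isOpen_preimage_u hι
  simp only [Set.preimage, Set.mem_singleton_iff, ParallelChains.flip_eq_iff] at h
  exact h

theorem exists_onChain_of_isPreconnected (hι : 3 < ENat.card ι) {S : Set (α × β)}
    (hS : IsPreconnected S) {y z : α × β} (hyS : y ∈ S) (hy : f y = u) (hzS : z ∈ S)
    (hz : f z = s) : ∃ x ∈ S, ∃ i, OnChain i (f x) := by
  by_contra! hno
  have hcover : S ⊆ f ⁻¹' {u} ∪ f ⁻¹' {s} := fun x hx =>
    (eq_u_or_eq_s_or_onChain (f x)).imp_right fun h =>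
      h.resolve_right fun ⟨i, hxi⟩ => hno x hx i hxi
  obtain ⟨x, -, hxu, hxs⟩ := hS _ _ (hf.isOpen_preimage_u hι) (hf.isOpen_preimage_s hι) hcover
    ⟨y, hyS, hy⟩ ⟨z, hzS, hz⟩
  have hus : (u : ParallelChains ι) = s := hxu.symm.trans hxs
  cases hus

end LinearOrder

end IsTemporalMorphism

section Real

open ParallelChains

variable {ι : Type*} {f : ℝ × ℝ → ParallelChains ι} {T : ℝ → ι}

/-- `T` assigns to the line `{x | x.1 - x.2 = t}` the unique chain that `f` meets on it. -/
def IsLineLabel (f : ℝ × ℝ → ParallelChains ι) (T : ℝ → ι) : Prop :=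
  ∀ t i, T t = i ↔ ∃ x : ℝ × ℝ, x.1 - x.2 = t ∧ OnChain i (f x)

theorem IsLineLabel.swap (hT : IsLineLabel f T) : IsLineLabel (f ∘ Prod.swap) (T ∘ Neg.neg) := by
  refine fun t i => (hT (-t) i).trans (Prod.swap_surjective.exists.trans ?_)
  exact exists_congr fun x => and_congr_left fun _ => by
    rw [Prod.fst_swap, Prod.snd_swap, ← neg_sub, neg_inj]

namespace IsTemporalMorphism

variable (hf : IsTemporalMorphism f)

include hf

theorem eq_of_onChain_of_sub_eq {x y : ℝ × ℝ} {i j : ι} (hx : OnChain i (f x))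
    (hy : OnChain j (f y)) (hxy : x.1 - x.2 = y.1 - y.2) : i = j := by
  obtain h | h := le_total x.2 y.2
  · exact hx.eq_of_le hy (hf.monotone ⟨by linarith, h⟩)
  · exact (hy.eq_of_le hx (hf.monotone ⟨by linarith, h⟩)).symm

theorem exists_isLineLabel (hι : 3 < ENat.card ι) : ∃ T, IsLineLabel f T := by
  obtain ⟨y, -, hy⟩ := hf.exists_le (x := 0) u_le
  obtain ⟨z, -, hz⟩ := hf.exists_ge (x := 0) le_s
  have exists_onChain (t : ℝ) : ∃ i, ∃ x : ℝ × ℝ, x.1 - x.2 = t ∧ OnChain i (f x) := by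
    have hline : IsPreconnected (Set.range fun r : ℝ => (r + t, r)) :=
      isPreconnected_range (by fun_prop)
    have hlow : f (min (y.1 - t) y.2 + t, min (y.1 - t) y.2) = u :=
      le_u_iff.1 (hy ▸ hf.monotone ⟨by grind, by grind⟩)
    have hhigh : f (max (z.1 - t) z.2 + t, max (z.1 - t) z.2) = s :=
      s_le_iff.1 (hz ▸ hf.monotone ⟨by grind, by grind⟩)
    obtain ⟨_, ⟨r, rfl⟩, i, hi⟩ :=
      hf.exists_onChain_of_isPreconnected hι hline ⟨_, rfl⟩ hlow ⟨_, rfl⟩ hhigh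
    exact ⟨i, (r + t, r), add_sub_cancel_left r t, hi⟩
  choose T hT using exists_onChain
  refine ⟨T, fun t i => ⟨?_, fun ⟨x, hxt, hx⟩ => ?_⟩⟩
  · rintro rfl
    exact hT t
  · obtain ⟨y, hyt, hy⟩ := hT t
    exact hf.eq_of_onChain_of_sub_eq hy hx (hyt.trans hxt.symm)

theorem lineLabel_eq_of_mem_Icc (hT : IsLineLabel f T) {y z : ℝ × ℝ} {i : ι} (hyz : y ≤ z)
    (hy : OnChain i (f y)) (hz : OnChain i (f z)) {r : ℝ}
    (hr : r ∈ Set.Icc (y.1 - z.2) (z.1 - y.2)) : T r = i := by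
  obtain ⟨w, hw, hwr⟩ := (convex_Icc y z).isPreconnected.intermediate_value
    (show (y.1, z.2) ∈ Set.Icc y z from ⟨⟨le_rfl, hyz.2⟩, ⟨hyz.1, le_rfl⟩⟩)
    (show (z.1, y.2) ∈ Set.Icc y z from ⟨⟨hyz.1, le_rfl⟩, ⟨le_rfl, hyz.2⟩⟩)
    (f := fun w => w.1 - w.2) (by fun_prop) hr
  exact (hT r i).2 ⟨w, hwr, hy.of_mem_Icc hz ⟨hf.monotone hw.1, hf.monotone hw.2⟩⟩

theorem eventually_lineLabel_eq (hT : IsLineLabel f T) (t : ℝ) :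
    (∀ᶠ r in 𝓝[>] t, T r = T t) ∨ ∀ᶠ r in 𝓝[<] t, T r = T t := by
  obtain ⟨x, hxt, hx⟩ := (hT t _).1 rfl
  obtain ⟨y, z, hxyz, hyz, hy, hz⟩ := hf.exists_lt_onChain hx
  have hconst : Set.Icc (y.1 - z.2) (z.1 - y.2) ⊆ {r | T r = T t} := fun r =>
    hf.lineLabel_eq_of_mem_Icc hT hyz.le hy hz
  have hlt : y.1 - z.2 < z.1 - y.2 := by
    obtain h | h := Prod.lt_iff.1 hyz <;> linarith
  have ht : t ∈ Set.Icc (y.1 - z.2) (z.1 - y.2) :=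
    hxt ▸ ⟨sub_le_sub hxyz.1.1 hxyz.2.2, sub_le_sub hxyz.2.1 hxyz.1.2⟩
  obtain h | h := ht.2.lt_or_eq
  · exact .inl (mem_of_superset (Icc_mem_nhdsGT_of_mem ⟨ht.1, h⟩) hconst)
  · exact .inr (mem_of_superset (Icc_mem_nhdsLT_of_mem ⟨h ▸ hlt, ht.2⟩) hconst)

theorem eventually_diagonal_eq_u (hι : 3 < ENat.card ι) {x : ℝ × ℝ} (hx : f x = u) :
    ∀ᶠ c in 𝓝[>] (0 : ℝ), f (x.1 + c, x.2 + c) = u := by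
  have hcont : Continuous fun c : ℝ => (x.1 + c, x.2 + c) := by fun_prop
  exact nhdsWithin_le_nhds
    (((hf.isOpen_preimage_u hι).preimage hcont).mem_nhds (by simpa using hx))

theorem lineLabel_eq_of_eventually_nhdsLT (hι : 3 < ENat.card ι) (hT : IsLineLabel f T) {t : ℝ}
    {k : ι} (h : ∀ᶠ r in 𝓝[<] t, T r = k) : T t = k := by
  by_contra hne
  obtain ⟨x, hxt, hx⟩ := (hT t _).1 rfl
  obtain ⟨a, ha, hak⟩ := mem_nhdsLT_iff_exists_Ioo_subset.1 h
  rw [Set.mem_Iio] at ha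
  have not_onChain (y : ℝ × ℝ) (hay : a < y.1 - y.2) (hyt : y.1 - y.2 < t) :
      ¬ OnChain (T t) (f y) := fun hy =>
    hne (((hT _ _).2 ⟨y, rfl, hy⟩).symm.trans (hak ⟨hay, hyt⟩))
  obtain ⟨m, ham, hmt⟩ := exists_between ha
  have hu : f (x.2 + m, x.2) = u :=
    hx.eq_u_of_le (hf.monotone ⟨by grind, le_rfl⟩) (not_onChain _ (by grind) (by grind))
  obtain ⟨c, hcu, hc, hca⟩ : ∃ c, f (x.2 + m + c, x.2 + c) = u ∧ 0 < c ∧ c < t - a :=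
    ((hf.eventually_diagonal_eq_u hι hu).and (Ioo_mem_nhdsGT (sub_pos.2 ha))).exists
  have hs : f (x.1, x.2 + c) = s :=
    hx.eq_s_of_le (hf.monotone ⟨le_rfl, by grind⟩) (not_onChain _ (by grind) (by grind))
  -- A third chain has no room below `(x.1, x.2 + c)`: points below `x` are comparable with `x`,
  -- lines between `a` and `t` meet only chain `k`, and points further left are labelled `u`.
  obtain ⟨l, hli, hlk⟩ := ENat.exists_ne_ne_of_three_le hι.le (T t) k
  obtain ⟨w, hw, hwl⟩ := hf.exists_le (le_s.trans_eq hs.symm : lo l ≤ _)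
  have hw₁ : w.1 ≤ x.1 := hw.1
  have hw₂ : w.2 ≤ x.2 + c := hw.2
  have hwx : x.2 < w.2 := by
    by_contra! hle
    exact hli (OnChain.eq_of_le (.inl hwl) hx (hf.monotone ⟨hw₁, hle⟩))
  have hwa : w.1 - w.2 ≤ a := by
    by_contra! hlt
    exact hlk (((hT _ _).2 ⟨w, rfl, .inl hwl⟩).symm.trans (hak ⟨hlt, by grind⟩))
  have hwu : f w ≤ u := hcu ▸ hf.monotone ⟨by grind, hw₂⟩
  exact OnChain.ne_u (.inl hwl) (le_u_iff.1 hwu)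

theorem lineLabel_eq_of_eventually_nhdsGT (hι : 3 < ENat.card ι) (hT : IsLineLabel f T) {t : ℝ}
    {k : ι} (h : ∀ᶠ r in 𝓝[>] t, T r = k) : T t = k := by
  have hswap : IsTemporalMorphism (f ∘ Prod.swap) := hf.comp_orderIso OrderIso.prodComm
  have hneg : ∀ᶠ r in 𝓝[<] (-t), (T ∘ Neg.neg) r = k :=
    tendsto_neg_nhdsLT_neg.eventually h
  simpa using hswap.lineLabel_eq_of_eventually_nhdsLT hι hT.swap hneg

end IsTemporalMorphism

theorem not_isTemporalMorphism_real (hι : 3 < ENat.card ι) (f : ℝ × ℝ → ParallelChains ι) :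
    ¬ IsTemporalMorphism f := by
  intro hf
  obtain ⟨T, hT⟩ := hf.exists_isLineLabel hι
  have hconst (t r : ℝ) : T t = T r := eq_of_one_sided_constancy
    (fun _ _ => hf.lineLabel_eq_of_eventually_nhdsLT hι hT)
    (fun _ _ => hf.lineLabel_eq_of_eventually_nhdsGT hι hT) (hf.eventually_lineLabel_eq hT) t r
  obtain ⟨x, -, hx⟩ := hf.exists_le (x := 0) u_le
  choose y _ hy using fun i => hf.exists_ge (hx.trans_le (u_le (a := lo i)))
  have hTy (i : ι) : T ((y i).1 - (y i).2) = i := (hT _ i).2 ⟨y i, rfl, .inl (hy i)⟩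
  have hsub : Subsingleton ι := ⟨fun i j => (hTy i).symm.trans ((hconst _ _).trans (hTy j))⟩
  exact hι.not_ge ((ENat.card_le_one_iff_subsingleton ι).2 hsub |>.trans (by norm_num))

end Real

section CutLabel

open ParallelChains

variable {X Y ι : Type*} [LinearOrder X] [LinearOrder Y] {h : X → Y} {l : Y → ι} {a b : X}

/-- The map `h` collapses `X` to a coarser order, with no least point in any fibre, and `l` colours
the collapsed points so that every colour occurs densely. -/
structure IsDenselyColouredCollapse (h : X → Y) (l : Y → ι) : Prop where
  monotone : Monotone h
  surjective : Function.Surjective h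
  exists_lt_eq (x : X) : ∃ y < x, h y = h x
  exists_mem_Ioo_eq {x y : Y} (hxy : x < y) (i : ι) : ∃ z ∈ Set.Ioo x y, l z = i

/-- A label for the pair of cuts at `a` and `b`, given a collapse `h` of `X` and a colouring `l` of
the collapsed points: only pairs inside one fibre of `h` are put on a chain, namely on the one given
by the colour of the fibre. -/
def cutLabel (h : X → Y) (l : Y → ι) (a b : X) : ParallelChains ι :=
  if h a < h b then u else if h b < h a then s else if a < b then lo (l (h a)) else hi (l (h a))

theorem cutLabel_eq_u (hab : h a < h b) : cutLabel h l a b = u := if_pos hab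

theorem cutLabel_eq_s (hab : h b < h a) : cutLabel h l a b = s := by
  rw [cutLabel, if_neg hab.not_gt, if_pos hab]

theorem cutLabel_eq_lo (hab : h a = h b) (hlt : a < b) : cutLabel h l a b = lo (l (h a)) := by
  rw [cutLabel, if_neg hab.not_lt, if_neg hab.not_gt, if_pos hlt]

theorem cutLabel_eq_hi (hab : h a = h b) (hle : b ≤ a) : cutLabel h l a b = hi (l (h a)) := by
  rw [cutLabel, if_neg hab.not_lt, if_neg hab.not_gt, if_neg hle.not_gt]

theorem cutLabel_mono (hmono : Monotone h) {a' b' : X} (ha : a ≤ a') (hb : b' ≤ b) :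
    cutLabel h l a b ≤ cutLabel h l a' b' := by
  have := hmono ha
  have := hmono hb
  grind [cutLabel, ParallelChains.le_def]

namespace IsDenselyColouredCollapse

theorem exists_mem_Icc_cutLabel_eq (H : IsDenselyColouredCollapse h l) (hab : h a < h b)
    {i : ι} {q : ParallelChains ι} (hq : OnChain i q) :
    ∃ c ∈ Set.Icc a b, ∃ d ∈ Set.Icc a b, cutLabel h l c d = q := by
  obtain ⟨y, ⟨hay, hyb⟩, hy⟩ := H.exists_mem_Ioo_eq hab i
  obtain ⟨d, rfl⟩ := H.surjective y
  obtain ⟨c, hcd, hc⟩ := H.exists_lt_eq d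
  have hd : d ∈ Set.Icc a b := ⟨(H.monotone.reflect_lt hay).le, (H.monotone.reflect_lt hyb).le⟩
  have hc' : c ∈ Set.Icc a b :=
    ⟨(H.monotone.reflect_lt (hay.trans_eq hc.symm)).le, hcd.le.trans hd.2⟩
  obtain rfl | rfl := hq
  · exact ⟨c, hc', d, hd, by rw [cutLabel_eq_lo hc hcd, hc, hy]⟩
  · exact ⟨d, hd, d, hd, by rw [cutLabel_eq_hi rfl le_rfl, hy]⟩

theorem exists_cutLabel_eq_of_le [NoMaxOrder Y] (H : IsDenselyColouredCollapse h l)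
    {q : ParallelChains ι} (hq : cutLabel h l a b ≤ q) :
    ∃ c d, a ≤ c ∧ d ≤ b ∧ cutLabel h l c d = q := by
  obtain rfl | hne := eq_or_ne q (cutLabel h l a b)
  · exact ⟨a, b, le_rfl, le_rfl, rfl⟩
  obtain rfl | rfl | ⟨i, hi⟩ := eq_u_or_eq_s_or_onChain q
  · exact absurd (le_u_iff.1 hq).symm hne
  · obtain ⟨y, hy⟩ := exists_gt (max (h a) (h b))
    obtain ⟨c, rfl⟩ := H.surjective y
    exact ⟨c, b, (H.monotone.reflect_lt (max_lt_iff.1 hy).1).le, le_rfl,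
      cutLabel_eq_s (max_lt_iff.1 hy).2⟩
  obtain hab | hab | hab := lt_trichotomy (h a) (h b)
  · obtain ⟨c, hc, d, hd, hcd⟩ := H.exists_mem_Icc_cutLabel_eq hab hi
    exact ⟨c, d, hc.1, hd.2, hcd⟩
  · obtain hlt | hle := lt_or_ge a b
    · rw [cutLabel_eq_lo hab hlt] at hq hne
      refine ⟨b, b, hlt.le, le_rfl, ?_⟩
      rw [cutLabel_eq_hi rfl le_rfl, ← hab]
      grind [ParallelChains.le_def, OnChain]
    · rw [cutLabel_eq_hi hab hle] at hq hne
      grind [ParallelChains.le_def, OnChain]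
  · rw [cutLabel_eq_s hab, s_le_iff] at hq
    exact absurd hq hi.ne_s

theorem exists_cutLabel_eq_of_ge [NoMinOrder Y] (H : IsDenselyColouredCollapse h l)
    {q : ParallelChains ι} (hq : q ≤ cutLabel h l a b) :
    ∃ c d, c ≤ a ∧ b ≤ d ∧ cutLabel h l c d = q := by
  obtain rfl | hne := eq_or_ne q (cutLabel h l a b)
  · exact ⟨a, b, le_rfl, le_rfl, rfl⟩
  obtain rfl | rfl | ⟨i, hi⟩ := eq_u_or_eq_s_or_onChain q
  · obtain ⟨y, hy⟩ := exists_lt (min (h a) (h b))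
    obtain ⟨c, rfl⟩ := H.surjective y
    exact ⟨c, b, (H.monotone.reflect_lt (lt_min_iff.1 hy).1).le, le_rfl,
      cutLabel_eq_u (lt_min_iff.1 hy).2⟩
  · exact absurd (s_le_iff.1 hq).symm hne
  obtain hab | hab | hab := lt_trichotomy (h a) (h b)
  · rw [cutLabel_eq_u hab, le_u_iff] at hq
    exact absurd hq hi.ne_u
  · obtain hlt | hle := lt_or_ge a b
    · rw [cutLabel_eq_lo hab hlt] at hq hne
      grind [ParallelChains.le_def, OnChain]
    · rw [cutLabel_eq_hi hab hle] at hq hne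
      obtain ⟨c, hcb, hc⟩ := H.exists_lt_eq b
      refine ⟨c, b, hcb.le.trans hle, le_rfl, ?_⟩
      rw [cutLabel_eq_lo hc hcb, hc, ← hab]
      grind [ParallelChains.le_def, OnChain]
  · obtain ⟨c, hc, d, hd, hcd⟩ := H.exists_mem_Icc_cutLabel_eq hab hi
    exact ⟨c, d, hc.2, hd.1, hcd⟩

theorem isTemporalMorphism_cutLabel [NoMaxOrder Y] [NoMinOrder Y]
    (H : IsDenselyColouredCollapse h l) :
    IsTemporalMorphism fun p : X × Xᵒᵈ => cutLabel h l p.1 (OrderDual.ofDual p.2) where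
  monotone _ _ hpq := cutLabel_mono H.monotone hpq.1 hpq.2
  exists_ge _ _ hq :=
    let ⟨c, d, hc, hd, hcd⟩ := H.exists_cutLabel_eq_of_le hq
    ⟨(c, OrderDual.toDual d), ⟨hc, hd⟩, hcd⟩
  exists_le _ _ hq :=
    let ⟨c, d, hc, hd, hcd⟩ := H.exists_cutLabel_eq_of_ge hq
    ⟨(c, OrderDual.toDual d), ⟨hc, hd⟩, hcd⟩

end IsDenselyColouredCollapse

end CutLabel

section Rat

theorem exists_mem_Ioo_den_eq_two_pow {x y : ℚ} {n : ℕ} (h : 4 < (y - x) * 2 ^ n) :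
    ∃ z ∈ Set.Ioo x y, z.den = 2 ^ n := by
  set m : ℤ := 2 * ⌊x * 2 ^ n / 2⌋ + 3 with hm
  have hpos : (0 : ℚ) < 2 ^ n := by positivity
  have hle := Int.floor_le (x * 2 ^ n / 2)
  have hlt := Int.lt_floor_add_one (x * 2 ^ n / 2)
  have hm' : (m : ℚ) = 2 * ⌊x * 2 ^ n / 2⌋ + 3 := by push_cast [hm]; rfl
  refine ⟨(m : ℚ) / 2 ^ n, ⟨?_, ?_⟩, ?_⟩
  · rw [lt_div_iff₀ hpos]
    linarith
  · rw [div_lt_iff₀ hpos]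
    linarith
  · have hodd : Odd m := ⟨⌊x * 2 ^ n / 2⌋ + 1, by lia⟩
    have hcop : m.natAbs.Coprime (2 ^ n : ℤ).natAbs := by
      rw [Int.natAbs_pow]
      exact ((Int.natAbs_odd.2 hodd).coprime_two_right).pow_right n
    exact_mod_cast Rat.den_div_eq_of_coprime (by positivity) hcop

theorem exists_dense_colouring_rat (ι : Type*) [Countable ι] [Nonempty ι] :
    ∃ l : ℚ → ι, ∀ {x y : ℚ}, x < y → ∀ i, ∃ z ∈ Set.Ioo x y, l z = i := by
  obtain ⟨g, hg⟩ := exists_surjective_nat ι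
  refine ⟨fun q => g (Nat.unpair (Nat.log 2 q.den)).1, fun {x y} hxy i => ?_⟩
  obtain ⟨n, rfl⟩ := hg i
  obtain ⟨k, hk⟩ := pow_unbounded_of_one_lt (4 / (y - x)) one_lt_two
  have hlarge : 4 < (y - x) * 2 ^ Nat.pair n k := by
    rw [← div_lt_iff₀' (sub_pos.2 hxy)]
    exact hk.trans_le (pow_le_pow_right₀ one_le_two (Nat.right_le_pair n k))
  obtain ⟨z, hz, hden⟩ := exists_mem_Ioo_den_eq_two_pow hlarge
  exact ⟨z, hz, by simp only [hden, Nat.log_pow one_lt_two, Nat.unpair_pair]⟩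

theorem exists_isTemporalMorphism_rat (ι : Type*) [Countable ι] [Nonempty ι] :
    ∃ f : ℚ × ℚ → ParallelChains ι, IsTemporalMorphism f := by
  obtain ⟨l, hl⟩ := exists_dense_colouring_rat ι
  have H : IsDenselyColouredCollapse (fun x : ℚ ×ₗ ℚ => (ofLex x).1) l :=
    { monotone := Prod.Lex.monotone_fst_ofLex
      surjective x := ⟨toLex (x, 0), rfl⟩
      exists_lt_eq x :=
        ⟨toLex ((ofLex x).1, (ofLex x).2 - 1), Prod.Lex.lt_iff.2 (by simp), rfl⟩
      exists_mem_Ioo_eq := hl }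
  have : Countable (ℚ ×ₗ ℚ) := inferInstanceAs (Countable (ℚ × ℚ))
  obtain ⟨e⟩ := Order.iso_of_countable_dense ℚ (ℚ ×ₗ ℚ)
  have : Countable (ℚ ×ₗ ℚ)ᵒᵈ := inferInstanceAs (Countable (ℚ × ℚ))
  obtain ⟨e'⟩ := Order.iso_of_countable_dense ℚ (ℚ ×ₗ ℚ)ᵒᵈ
  let e₂ : ℚ × ℚ ≃o (ℚ ×ₗ ℚ) × (ℚ ×ₗ ℚ)ᵒᵈ :=
    { toEquiv := e.toEquiv.prodCongr e'.toEquiv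
      map_rel_iff' := by simp [Prod.le_def] }
  exact ⟨_, H.isTemporalMorphism_cutLabel.comp_orderIso e₂⟩

end Rat

end

/-- The formula `Δ(P₁)` is satisfiable over `(ℚ², ≤)` and `(ℚ², <)`, but not over
`(ℝ², ≤)` nor `(ℝ², <)`, where `≤` is the componentwise order and `<` its
irreflexive part. -/
theorem delta_P1_distinguishes_rational_from_real :
    TSatisfiable (fun p q : ℚ × ℚ => p ≤ q) (delta 10 ltP1) ∧
    TSatisfiable (fun p q : ℚ × ℚ => p ≤ q ∧ p ≠ q) (delta 10 ltP1) ∧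
    ¬ TSatisfiable (fun p q : ℝ × ℝ => p ≤ q) (delta 10 ltP1) ∧
    ¬ TSatisfiable (fun p q : ℝ × ℝ => p ≤ q ∧ p ≠ q) (delta 10 ltP1) := by
  simp only [← lt_iff_le_and_ne,
    tSatisfiable_le_delta_iff ParallelChains.equivFin ParallelChains.ltP1_equivFin,
    tSatisfiable_lt_delta_iff ParallelChains.equivFin ParallelChains.ltP1_equivFin]
  have hrat := exists_isTemporalMorphism_rat (Fin 4)
  have hreal : ¬ ∃ f : ℝ × ℝ → ParallelChains (Fin 4), IsTemporalMorphism f :=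
    not_exists.2 (not_isTemporalMorphism_real (by norm_num))
  exact ⟨hrat, hrat, hreal, hreal⟩

end Temporal
end
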